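/- arXiv:2012.08934 — 3 statements merged into one kernel-verified Lean document; each statement's English description precedes it below -/
import Mathlib

section
/- The density of primes in the interval [1,n] satisfies π(n)/n = (1/ln n)(1 + o(1)); equivalently, π(n)·(ln n)/n tends to 1 as n → ∞. -/
open Filter

/-- The prime counting function: number of primes `p ≤ n`. -/
def primePi (n : ℕ) : ℕ := ((Finset.Iic n).filter Nat.Prime).card

/-!
By Chebyshev's estimates it suffices to show `ψ(x) ~ x`. Put `φ(u) = ψ(e^u) e^{-u}`, which is
bounded. The Laplace transform of `φ - 1` extends continuously to the imaginary axis, because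
`-ζ'/ζ(s) - 1/(s - 1)` extends continuously to `re s ≥ 1`. Averaging `φ - 1` near `y` against a
kernel whose Fourier transform has compact support therefore gives the Fourier transform of a
compactly supported continuous function at frequency `-y`, and this tends to `0` as `y → ∞` by the
Riemann–Lebesgue lemma. So every such local average of `φ` tends to `1`. As `φ(u) e^u` is
increasing, `φ` loses at most a factor `e^{-2δ}` over an interval of length `2δ`, so `φ` itself
tends to `1`.
-/

section

open MeasureTheory Set Topology FourierTransform ComplexConjugate Asymptotics

/-! ### Band-limited kernels -/

/-- A probability density on `ℝ` that is the Fourier transform of a continuous compactly supported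
function. Convolution against it smooths a function using only a bounded range of frequencies. -/
structure IsBandlimitedKernel (K : ℝ → ℝ) : Prop where
  nonneg : ∀ v, 0 ≤ K v
  integrable : Integrable K
  integral_eq_one : ∫ v, K v = 1
  exists_fourier_eq : ∃ h : ℝ → ℂ, Continuous h ∧ HasCompactSupport h ∧ ∀ v, 𝓕 h v = K v

theorem fourier_conj_comp_neg (f : ℝ → ℂ) (v : ℝ) :
    𝓕 (fun t ↦ conj (f (-t))) v = conj (𝓕 f v) := by
  rw [Real.fourier_real_eq, Real.fourier_real_eq, ← integral_conj,
    ← integral_neg_eq_self]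
  simp [Circle.smul_def, ← Circle.coe_inv_eq_conj, ← AddChar.map_neg_eq_inv]

theorem exists_fourier_eq_norm_fourier_sq {g : ℝ → ℂ} (hg : Continuous g)
    (hgc : HasCompactSupport g) :
    ∃ h : ℝ → ℂ, Continuous h ∧ HasCompactSupport h ∧ ∀ v, 𝓕 h v = ((‖𝓕 g v‖ ^ 2 : ℝ) : ℂ) := by
  let g' : ℝ → ℂ := fun t ↦ conj (g (-t))
  have hg' : Continuous g' := by fun_prop
  have hgc' : HasCompactSupport g' :=
    (hgc.comp_homeomorph (Homeomorph.neg ℝ)).comp_left (map_zero _)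
  have hint := hg.integrable_of_hasCompactSupport (μ := volume) hgc
  have hint' := hg'.integrable_of_hasCompactSupport (μ := volume) hgc'
  refine ⟨convolution g g' (ContinuousLinearMap.mul ℂ ℂ) volume,
    hgc.continuous_convolution_left _ hg hint'.locallyIntegrable, hgc.convolution _ hgc',
    fun v ↦ ?_⟩
  rw [Real.fourier_mul_convolution_eq hint hint', fourier_conj_comp_neg, Complex.mul_conj']
  norm_cast

theorem exists_isBandlimitedKernel : ∃ K, IsBandlimitedKernel K := by
  obtain ⟨bump⟩ : Nonempty (ContDiffBump (0 : ℝ)) := inferInstance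
  let g : ℝ → ℂ := fun t ↦ (bump t : ℂ)
  have hgc : HasCompactSupport g := bump.hasCompactSupport.comp_left Complex.ofReal_zero
  have hgd : ContDiff ℝ (↑(⊤ : ℕ∞)) g := Complex.ofRealCLM.contDiff.comp bump.contDiff
  let γ := 𝓕 (hgc.toSchwartzMap hgd)
  have hγ : ⇑γ = 𝓕 g := SchwartzMap.fourier_coe _
  have hγ0 : 𝓕 g 0 ≠ 0 := by
    simpa [Real.fourier_real_eq, g, integral_complex_ofReal] using bump.integral_pos.ne'
  have hint : Integrable fun v ↦ ‖𝓕 g v‖ ^ 2 := by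
    simpa only [← hγ] using (γ.memLp 2).integrable_norm_pow two_ne_zero
  have hpos : 0 < ∫ v, ‖𝓕 g v‖ ^ 2 :=
    integral_pos_of_integrable_nonneg_nonzero (x := 0) (by rw [← hγ]; fun_prop) hint
      (fun v ↦ by positivity) (by simpa using hγ0)
  obtain ⟨h, hcont, hsupp, hh⟩ := exists_fourier_eq_norm_fourier_sq hgd.continuous hgc
  generalize hc : ∫ v, ‖𝓕 g v‖ ^ 2 = c at hpos
  refine ⟨fun v ↦ c⁻¹ * ‖𝓕 g v‖ ^ 2, fun v ↦ by positivity, hint.const_mul _, ?_,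
    fun t ↦ (c⁻¹ : ℂ) * h t, by fun_prop, hsupp.mul_left (f := fun _ ↦ (c⁻¹ : ℂ)), fun v ↦ ?_⟩
  · rw [integral_const_mul, hc, inv_mul_cancel₀ hpos.ne']
  · calc 𝓕 (fun t ↦ (c⁻¹ : ℂ) * h t) v
      _ = (c⁻¹ : ℂ) • 𝓕 h v := congrFun (VectorFourier.fourierIntegral_const_smul _ _ _ h _) v
      _ = ((c⁻¹ * ‖𝓕 g v‖ ^ 2 : ℝ) : ℂ) := by rw [hh]; push_cast; rfl

theorem IsBandlimitedKernel.dilate {K : ℝ → ℝ} (hK : IsBandlimitedKernel K) {r : ℝ} (hr : 0 < r) :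
    IsBandlimitedKernel fun v ↦ r * K (r * v) := by
  obtain ⟨h, hcont, hsupp, hh⟩ := hK.exists_fourier_eq
  refine ⟨fun v ↦ mul_nonneg hr.le (hK.nonneg _),
    (hK.integrable.comp_mul_left' hr.ne').const_mul r, ?_,
    fun t ↦ h (t / r), by fun_prop, ?_, fun v ↦ ?_⟩
  · rw [integral_const_mul, Measure.integral_comp_mul_left, hK.integral_eq_one,
      abs_of_pos (inv_pos.2 hr), smul_eq_mul, mul_one, mul_inv_cancel₀ hr.ne']
  · simpa only [div_eq_mul_inv] using!
      hsupp.comp_homeomorph (Homeomorph.mulRight₀ r⁻¹ (inv_ne_zero hr.ne'))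
  · have hsub : ∀ t, 𝐞 (-(t * v)) • h (t / r) = (fun s ↦ 𝐞 (-(s * (r * v))) • h s) (t / r) :=
      fun t ↦ by beta_reduce; congr 3; field_simp
    simp_rw [Real.fourier_real_eq, hsub]
    rw [Measure.integral_comp_div (fun s ↦ 𝐞 (-(s * (r * v))) • h s), ← Real.fourier_real_eq, hh,
      abs_of_pos hr, Complex.real_smul, Complex.ofReal_mul]

theorem exists_isBandlimitedKernel_lt_integral {δ : ℝ} (hδ : 0 < δ) {m : ℝ} (hm : m < 1) :
    ∃ K, IsBandlimitedKernel K ∧ m < ∫ v in -δ..δ, K v := by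
  obtain ⟨K, hK⟩ := exists_isBandlimitedKernel
  have hlim : Tendsto (fun r : ℝ ↦ ∫ v in -(r * δ)..r * δ, K v) atTop (𝓝 1) := by
    have hr : Tendsto (fun r : ℝ ↦ r * δ) atTop atTop := tendsto_id.atTop_mul_const hδ
    simpa only [hK.integral_eq_one, Function.comp_apply] using
      intervalIntegral_tendsto_integral hK.integrable (tendsto_neg_atTop_atBot.comp hr) hr
  obtain ⟨r, hmr, hr⟩ := ((hlim.eventually_const_lt hm).and (eventually_gt_atTop 0)).exists
  refine ⟨_, hK.dilate hr, hmr.trans_eq ?_⟩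
  rw [intervalIntegral.integral_const_mul, intervalIntegral.mul_integral_comp_mul_left, mul_neg]

/-! ### Laplace transforms near the imaginary axis -/

/-- The one-sided Laplace transform `∫₀^∞ f(u) e^{-zu} du`, with value `0` where the integral does
not converge absolutely. -/
noncomputable def laplaceTransform (f : ℝ → ℂ) (z : ℂ) : ℂ :=
  ∫ u in Ioi (0 : ℝ), f u * Complex.exp (-z * u)

theorem fourier_fourierChar_smul (h : ℝ → ℂ) (y v : ℝ) :
    𝓕 (fun t ↦ 𝐞 (t * y) • h t) v = 𝓕 h (v - y) := by
  simp_rw [Real.fourier_real_eq, smul_smul, ← AddChar.map_add_eq_mul, mul_sub, neg_sub,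
    sub_eq_neg_add]

theorem fourier_indicator_Ioi_mul_exp (f : ℝ → ℂ) (z : ℂ) (t : ℝ) :
    𝓕 ((Ioi 0).indicator fun u ↦ f u * Complex.exp (-z * u)) t =
      laplaceTransform f (z + 2 * Real.pi * Complex.I * t) := by
  rw [Real.fourier_real_eq, laplaceTransform]
  simp_rw [← indicator_smul_apply (Ioi 0) fun v ↦ 𝐞 (-(v * t))]
  rw [integral_indicator measurableSet_Ioi]
  refine integral_congr_ae (.of_forall fun u ↦ ?_)
  simp only [Circle.smul_def, Real.fourierChar_apply, smul_eq_mul]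
  rw [mul_left_comm, ← Complex.exp_add]
  push_cast
  ring_nf

theorem integral_mul_fourier_eq_integral_mul_laplaceTransform {f g : ℝ → ℂ} {z : ℂ}
    (hf : IntegrableOn (fun u : ℝ ↦ f u * Complex.exp (-z * u)) (Ioi 0)) (hg : Integrable g) :
    ∫ u in Ioi (0 : ℝ), 𝓕 g u * f u * Complex.exp (-z * u) =
      ∫ t, g t * laplaceTransform f (z + 2 * Real.pi * Complex.I * t) := by
  have hflip := VectorFourier.integral_fourierIntegral_smul_eq_flip (L := innerₗ ℝ)
    Real.continuous_fourierChar continuous_inner hg (hf.integrable_indicator measurableSet_Ioi)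
  rw [flip_innerₗ] at hflip
  calc ∫ u in Ioi (0 : ℝ), 𝓕 g u * f u * Complex.exp (-z * u)
    _ = ∫ u, 𝓕 g u • (Ioi 0).indicator (fun u : ℝ ↦ f u * Complex.exp (-z * u)) u := by
      rw [← integral_indicator measurableSet_Ioi]
      simp_rw [mul_assoc, indicator_mul_right, smul_eq_mul]
    _ = ∫ t, g t * 𝓕 ((Ioi 0).indicator fun u ↦ f u * Complex.exp (-z * u)) t := hflip
    _ = _ := by simp_rw [fourier_indicator_Ioi_mul_exp]

theorem integrableOn_mul_exp_Ioi {f : ℝ → ℂ} {M : ℝ} {z : ℂ} (hz : 0 < z.re)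
    (hf : AEStronglyMeasurable f (volume.restrict (Ioi 0))) (hM : ∀ u ∈ Ioi 0, ‖f u‖ ≤ M) :
    IntegrableOn (fun u : ℝ ↦ f u * Complex.exp (-z * u)) (Ioi 0) :=
  (integrableOn_exp_mul_complex_Ioi (by simpa using hz) 0).bdd_mul hf
    ((ae_restrict_mem measurableSet_Ioi).mono hM)

theorem tendsto_laplaceTransform_ofReal {F : ℝ → ℂ} (hF : IntegrableOn F (Ioi 0)) :
    Tendsto (fun ε : ℝ ↦ laplaceTransform F ε) (𝓝[>] 0) (𝓝 (∫ u in Ioi 0, F u)) := by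
  refine tendsto_integral_filter_of_dominated_convergence (fun u ↦ ‖F u‖) ?_ ?_ hF.norm ?_
  · exact .of_forall fun ε ↦ hF.aestronglyMeasurable.mul (by fun_prop)
  · filter_upwards [self_mem_nhdsWithin] with ε hε
    filter_upwards [ae_restrict_mem measurableSet_Ioi] with u hu
    rw [norm_mul, Complex.norm_exp]
    refine mul_le_of_le_one_right (norm_nonneg _) (Real.exp_le_one_iff.2 ?_)
    simpa using (mul_pos hε hu).le
  · refine .of_forall fun u ↦ tendsto_nhdsWithin_of_tendsto_nhds ?_
    have : Continuous fun ε : ℝ ↦ F u * Complex.exp (-ε * u) := by fun_prop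
    simpa using this.tendsto 0

theorem tendsto_integral_mul_vertical_line {g : ℝ → ℂ} {G : ℂ → ℂ} (hg : Continuous g)
    (hgc : HasCompactSupport g) (hG : ContinuousOn G {z | 0 ≤ z.re}) :
    Tendsto (fun ε : ℝ ↦ ∫ t, g t * G (ε + 2 * Real.pi * Complex.I * t)) (𝓝[>] 0)
      (𝓝 (∫ t, g t * G (2 * Real.pi * Complex.I * t))) := by
  have hline : ContinuousOn
      (Function.uncurry fun (ε t : ℝ) ↦ g t * G (ε + 2 * Real.pi * Complex.I * t))
      (Ici 0 ×ˢ univ) := by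
    refine (by fun_prop : Continuous fun p : ℝ × ℝ ↦ g p.2).continuousOn.mul
      (hG.comp (by fun_prop) ?_)
    rintro ⟨ε, t⟩ ⟨hε, -⟩
    simpa using hε
  have hcont := continuousOn_integral_of_compact_support (μ := volume) hgc hline
    fun ε t _ ht ↦ by simp [image_eq_zero_of_notMem_tsupport ht]
  simpa using ((hcont 0 self_mem_Ici).mono Ioi_subset_Ici_self).tendsto

theorem integral_mul_fourier_eq_integral_mul_boundary {f g : ℝ → ℂ} {G : ℂ → ℂ} {M : ℝ}
    (hf : AEStronglyMeasurable f (volume.restrict (Ioi 0))) (hM : ∀ u ∈ Ioi 0, ‖f u‖ ≤ M)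
    (hG : ContinuousOn G {z | 0 ≤ z.re}) (hfG : EqOn (laplaceTransform f) G {z | 0 < z.re})
    (hg : Continuous g) (hgc : HasCompactSupport g) (hgi : Integrable (𝓕 g)) :
    ∫ u in Ioi (0 : ℝ), 𝓕 g u * f u = ∫ t, g t * G (2 * Real.pi * Complex.I * t) := by
  have hFint : IntegrableOn (fun u ↦ 𝓕 g u * f u) (Ioi 0) :=
    hgi.integrableOn.mul_bdd hf ((ae_restrict_mem measurableSet_Ioi).mono hM)
  -- The factor `exp (-ε * u)` makes Fubini applicable; then `ε → 0`.
  refine tendsto_nhds_unique (tendsto_laplaceTransform_ofReal hFint) <|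
    (tendsto_integral_mul_vertical_line hg hgc hG).congr' ?_
  filter_upwards [self_mem_nhdsWithin] with ε (hε : 0 < ε)
  have hre : 0 < (ε : ℂ).re := hε
  rw [laplaceTransform, integral_mul_fourier_eq_integral_mul_laplaceTransform
    (integrableOn_mul_exp_Ioi hre hf hM) (hg.integrable_of_hasCompactSupport hgc)]
  congr! 3 with t
  exact (hfG (by simpa using hε)).symm

theorem tendsto_integral_fourier_sub_mul {f h : ℝ → ℂ} {G : ℂ → ℂ} {M : ℝ}
    (hf : AEStronglyMeasurable f (volume.restrict (Ioi 0))) (hM : ∀ u ∈ Ioi 0, ‖f u‖ ≤ M)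
    (hG : ContinuousOn G {z | 0 ≤ z.re}) (hfG : EqOn (laplaceTransform f) G {z | 0 < z.re})
    (hh : Continuous h) (hhc : HasCompactSupport h) (hhi : Integrable (𝓕 h)) :
    Tendsto (fun y ↦ ∫ u in Ioi (0 : ℝ), 𝓕 h (u - y) * f u) atTop (𝓝 0) := by
  let H : ℝ → ℂ := fun t ↦ h t * G (2 * Real.pi * Complex.I * t)
  have hRL : Tendsto (fun y ↦ 𝓕 H (-y)) atTop (𝓝 0) :=
    (Real.zero_at_infty_fourier H).comp (tendsto_neg_atTop_atBot.mono_right atBot_le_cocompact)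
  refine hRL.congr fun y ↦ ?_
  have hshift : 𝓕 (fun t ↦ 𝐞 (t * y) • h t) = fun v ↦ 𝓕 h (v - y) :=
    funext (fourier_fourierChar_smul h y)
  have hboundary := integral_mul_fourier_eq_integral_mul_boundary
    (g := fun t ↦ 𝐞 (t * y) • h t) hf hM hG hfG (by fun_prop)
    hhc.smul_left (hshift ▸ hhi.comp_sub_right y)
  rw [hshift] at hboundary
  rw [hboundary, Real.fourier_real_eq]
  simp_rw [H, mul_neg, neg_neg, smul_mul_assoc]

/-! ### A Tauberian theorem for slowly decreasing functions -/

/-- The average of `φ` over `(0, ∞)` with the weight `K` centred at `y`, written in the variable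
`v = u - y`. -/
noncomputable def movingAverage (K φ : ℝ → ℝ) (y : ℝ) : ℝ :=
  ∫ v in Ioi (-y), K v * φ (v + y)

theorem movingAverage_eq_integral (K φ : ℝ → ℝ) (y : ℝ) :
    movingAverage K φ y = ∫ u in Ioi 0, K (u - y) * φ u := by
  simpa using! (measurePreserving_add_right volume y).setIntegral_preimage_emb
    (measurableEmbedding_addRight y) (fun u ↦ K (u - y) * φ u) (Ioi 0)

theorem integrableOn_Ioi_mul_comp_add_right {K φ : ℝ → ℝ} {M : ℝ} (hK : Integrable K)
    (hφ : AEStronglyMeasurable φ (volume.restrict (Ioi 0))) (hM : ∀ u ∈ Ioi 0, |φ u| ≤ M) (y : ℝ) :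
    IntegrableOn (fun v ↦ K v * φ (v + y)) (Ioi (-y)) := by
  have h : IntegrableOn (fun u ↦ K (u - y) * φ u) (Ioi 0) :=
    (hK.comp_sub_right y).integrableOn.mul_bdd hφ ((ae_restrict_mem measurableSet_Ioi).mono hM)
  simpa [Function.comp_def] using (measurePreserving_add_right volume y).integrableOn_comp_preimage
    (measurableEmbedding_addRight y) |>.2 h

theorem IsBandlimitedKernel.tendsto_movingAverage {K φ : ℝ → ℝ} {G : ℂ → ℂ} {A M : ℝ}
    (hK : IsBandlimitedKernel K)
    (hφ : AEStronglyMeasurable φ (volume.restrict (Ioi 0))) (hM : ∀ u ∈ Ioi 0, |φ u| ≤ M)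
    (hG : ContinuousOn G {z | 0 ≤ z.re})
    (hφG : EqOn (laplaceTransform fun u ↦ ((φ u - A : ℝ) : ℂ)) G {z | 0 < z.re}) :
    Tendsto (movingAverage K φ) atTop (𝓝 A) := by
  obtain ⟨h, hcont, hsupp, hh⟩ := hK.exists_fourier_eq
  have herr : Tendsto (fun y ↦ ∫ u in Ioi (0 : ℝ), K (u - y) * (φ u - A)) atTop (𝓝 0) := by
    have := tendsto_integral_fourier_sub_mul (f := fun u ↦ ((φ u - A : ℝ) : ℂ)) (M := M + |A|)
      (Complex.continuous_ofReal.comp_aestronglyMeasurable (hφ.sub aestronglyMeasurable_const))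
      (fun u hu ↦ by
        rw [Complex.norm_real]
        exact (norm_sub_le _ _).trans (add_le_add_left (hM u hu) _))
      hG hφG hcont hsupp (by simpa only [funext hh] using! hK.integrable.ofReal)
    simp_rw [hh, ← Complex.ofReal_mul, integral_complex_ofReal] at this
    rw [← tendsto_ofReal_iff]
    exact_mod_cast this
  have hmass : Tendsto (fun y ↦ ∫ v in Ioi (-y), K v) atTop (𝓝 1) := by
    rw [← hK.integral_eq_one]
    exact (aecover_Ioi tendsto_neg_atTop_atBot).integral_tendsto_of_countably_generated
      hK.integrable
  have hsplit : ∀ y, (∫ u in Ioi (0 : ℝ), K (u - y) * (φ u - A)) + A * ∫ v in Ioi (-y), K v =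
      movingAverage K φ y := by
    intro y
    rw [← movingAverage_eq_integral K fun u ↦ φ u - A, movingAverage, ← integral_const_mul,
      ← integral_add _ (hK.integrable.integrableOn.const_mul A)]
    · simp_rw [mul_sub, mul_comm A, sub_add_cancel, movingAverage]
    · simp_rw [mul_sub]
      exact (integrableOn_Ioi_mul_comp_add_right hK.integrable hφ hM y).sub
        (hK.integrable.integrableOn.mul_const A)
  simpa only [hsplit, zero_add, mul_one] using herr.add (hmass.const_mul A)

section SlowlyDecreasing

variable {K φ : ℝ → ℝ} {M δ y : ℝ}

theorem mul_exp_neg_le_of_monotoneOn_mul_exp (hφ : MonotoneOn (fun u ↦ φ u * Real.exp u) (Ioi 0))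
    (h0 : ∀ u ∈ Ioi 0, 0 ≤ φ u) {u w d : ℝ} (hu : 0 < u) (huw : u ≤ w) (hwu : w ≤ u + d) :
    φ u * Real.exp (-d) ≤ φ w := by
  have h := hφ hu (hu.trans_le huw) huw
  calc φ u * Real.exp (-d)
    _ ≤ φ u * Real.exp (u - w) :=
      mul_le_mul_of_nonneg_left (Real.exp_le_exp.2 (by linarith)) (h0 u hu)
    _ = φ u * Real.exp u * Real.exp (-w) := by rw [mul_assoc, ← Real.exp_add, sub_eq_add_neg]
    _ ≤ φ w * Real.exp w * Real.exp (-w) := by gcongr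
    _ = φ w := by rw [mul_assoc, ← Real.exp_add, add_neg_cancel, Real.exp_zero, mul_one]

theorem aestronglyMeasurable_of_monotoneOn_mul_exp {s : Set ℝ} (hs : MeasurableSet s)
    (hφ : MonotoneOn (fun u ↦ φ u * Real.exp u) s) :
    AEStronglyMeasurable φ (volume.restrict s) := by
  have h := (aemeasurable_restrict_of_monotoneOn (μ := volume) hs hφ).mul
    (by fun_prop : Measurable fun u ↦ Real.exp (-u)).aemeasurable
  refine (h.congr (.of_forall fun u ↦ ?_)).aestronglyMeasurable
  simp [mul_assoc, ← Real.exp_add]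

theorem integral_mul_apply_sub_le_movingAverage (hK0 : ∀ v, 0 ≤ K v) (hK : Integrable K)
    (hφ : MonotoneOn (fun u ↦ φ u * Real.exp u) (Ioi 0)) (h0 : ∀ u ∈ Ioi 0, 0 ≤ φ u)
    (hM : ∀ u ∈ Ioi 0, φ u ≤ M) (hδ : 0 < δ) (hy : δ < y) :
    (∫ v in -δ..δ, K v) * (φ (y - δ) * Real.exp (-(2 * δ))) ≤
      movingAverage K φ y := by
  have hint := integrableOn_Ioi_mul_comp_add_right hK
    (aestronglyMeasurable_of_monotoneOn_mul_exp measurableSet_Ioi hφ)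
    (fun u hu ↦ (abs_of_nonneg (h0 u hu)).trans_le (hM u hu)) y
  have hsub : Ioc (-δ) δ ⊆ Ioi (-y) := fun v hv ↦ (neg_lt_neg hy).trans hv.1
  rw [intervalIntegral.integral_of_le (by linarith), ← integral_mul_const]
  calc ∫ v in Ioc (-δ) δ, K v * (φ (y - δ) * Real.exp (-(2 * δ)))
    _ ≤ ∫ v in Ioc (-δ) δ, K v * φ (v + y) := by
      refine setIntegral_mono_on (hK.integrableOn.mul_const _) (hint.mono_set hsub)
        measurableSet_Ioc fun v ⟨hv, hv'⟩ ↦ mul_le_mul_of_nonneg_left ?_ (hK0 v)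
      exact mul_exp_neg_le_of_monotoneOn_mul_exp hφ h0 (by linarith) (by linarith) (by linarith)
    _ ≤ ∫ v in Ioi (-y), K v * φ (v + y) := by
      refine setIntegral_mono_set hint ?_ hsub.eventuallyLE
      filter_upwards [ae_restrict_mem measurableSet_Ioi] with v (hv : -y < v)
      exact mul_nonneg (hK0 v) (h0 _ (by simp; linarith))

theorem movingAverage_le_integral_mul_apply_add (hK0 : ∀ v, 0 ≤ K v) (hK : Integrable K)
    (hφ : MonotoneOn (fun u ↦ φ u * Real.exp u) (Ioi 0)) (h0 : ∀ u ∈ Ioi 0, 0 ≤ φ u)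
    (hM : ∀ u ∈ Ioi 0, φ u ≤ M) (hδ : 0 < δ) (hy : 0 < y) :
    movingAverage K φ y ≤
      (∫ v, K v) * (φ (y + δ) * Real.exp (2 * δ)) + M * ((∫ v, K v) - ∫ v in -δ..δ, K v) := by
  have hint := integrableOn_Ioi_mul_comp_add_right hK
    (aestronglyMeasurable_of_monotoneOn_mul_exp measurableSet_Ioi hφ)
    (fun u hu ↦ (abs_of_nonneg (h0 u hu)).trans_le (hM u hu)) y
  have hM0 : 0 ≤ M := (h0 y hy).trans (hM y hy)
  have hc0 : 0 ≤ φ (y + δ) * Real.exp (2 * δ) :=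
    mul_nonneg (h0 _ (add_pos hy hδ)) (Real.exp_pos _).le
  set c := φ (y + δ) * Real.exp (2 * δ)
  let S := Ioc (-δ) δ
  have hmaj : Integrable fun v ↦ K v * c + M * Sᶜ.indicator K v :=
    (hK.mul_const c).add ((hK.indicator measurableSet_Ioc.compl).const_mul M)
  have hbound : ∀ v ∈ Ioi (-y), K v * φ (v + y) ≤ K v * c + M * Sᶜ.indicator K v := by
    intro v (hv : -y < v)
    have hvy : 0 < v + y := by linarith
    by_cases hvS : v ∈ S
    · have h := mul_exp_neg_le_of_monotoneOn_mul_exp (d := 2 * δ) hφ h0 hvy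
        (by linarith [hvS.2] : v + y ≤ y + δ) (by linarith [hvS.1])
      have : φ (v + y) ≤ c := by
        rwa [Real.exp_neg, ← div_eq_mul_inv, div_le_iff₀ (Real.exp_pos _)] at h
      simpa [hvS] using mul_le_mul_of_nonneg_left this (hK0 v)
    · rw [indicator_of_mem hvS, mul_comm M]
      exact (mul_le_mul_of_nonneg_left (hM _ hvy) (hK0 v)).trans
        (le_add_of_nonneg_left (mul_nonneg (hK0 v) hc0))
  calc ∫ v in Ioi (-y), K v * φ (v + y)
    _ ≤ ∫ v in Ioi (-y), (K v * c + M * Sᶜ.indicator K v) :=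
      setIntegral_mono_on hint hmaj.integrableOn measurableSet_Ioi hbound
    _ ≤ ∫ v, (K v * c + M * Sᶜ.indicator K v) :=
      setIntegral_le_integral hmaj <| .of_forall fun v ↦
        add_nonneg (mul_nonneg (hK0 v) hc0) (mul_nonneg hM0 (indicator_nonneg (fun _ _ ↦ hK0 _) v))
    _ = (∫ v, K v) * c + M * ((∫ v, K v) - ∫ v in -δ..δ, K v) := by
      rw [integral_add (hK.mul_const c) ((hK.indicator measurableSet_Ioc.compl).const_mul M),
        integral_mul_const, integral_const_mul, integral_indicator measurableSet_Ioc.compl,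
        intervalIntegral.integral_of_le (by linarith), setIntegral_compl measurableSet_Ioc hK]

theorem eventually_mem_Icc_of_forall_tendsto_movingAverage {A : ℝ}
    (hφ : MonotoneOn (fun u ↦ φ u * Real.exp u) (Ioi 0)) (h0 : ∀ u ∈ Ioi 0, 0 ≤ φ u)
    (hM : ∀ u ∈ Ioi 0, φ u ≤ M)
    (hmean : ∀ K, IsBandlimitedKernel K → Tendsto (movingAverage K φ) atTop (𝓝 A))
    (hδ : 0 < δ) (hδ1 : δ < 1) :
    ∀ᶠ u in atTop, φ u ∈
      Icc ((A - δ - M * δ) * Real.exp (-(2 * δ))) ((A + δ) * Real.exp (2 * δ) / (1 - δ)) := by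
  have hM0 : 0 ≤ M := (h0 1 (mem_Ioi.2 one_pos)).trans (hM 1 (mem_Ioi.2 one_pos))
  obtain ⟨K, hK, hKδ⟩ := exists_isBandlimitedKernel_lt_integral hδ (sub_lt_self 1 hδ)
  have hnear := (hmean K hK).eventually
    (Ioo_mem_nhds (sub_lt_self A hδ) (lt_add_of_pos_right A hδ))
  filter_upwards [(tendsto_atTop_add_const_right _ (-δ) tendsto_id).eventually hnear,
    (tendsto_atTop_add_const_right _ δ tendsto_id).eventually hnear,
    eventually_gt_atTop δ] with u hlow hupp hu
  rw [id] at hlow hupp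
  constructor
  · have h := movingAverage_le_integral_mul_apply_add hK.nonneg hK.integrable hφ h0 hM hδ
      (by linarith : 0 < u + -δ)
    rw [hK.integral_eq_one, one_mul, neg_add_cancel_right] at h
    rw [Real.exp_neg, ← div_eq_mul_inv, div_le_iff₀ (Real.exp_pos _)]
    have htail : M * (1 - ∫ v in -δ..δ, K v) ≤ M * δ :=
      mul_le_mul_of_nonneg_left (by linarith) hM0
    linarith [hlow.1]
  · have h := integral_mul_apply_sub_le_movingAverage hK.nonneg hK.integrable hφ h0 hM hδ
      (by linarith : δ < u + δ)
    rw [add_sub_cancel_right] at h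
    rw [le_div_iff₀ (by linarith), ← div_le_iff₀ (Real.exp_pos _), div_eq_mul_inv, ← Real.exp_neg]
    have := h0 u (hδ.trans hu)
    calc φ u * (1 - δ) * Real.exp (-(2 * δ))
      _ = (1 - δ) * (φ u * Real.exp (-(2 * δ))) := by ring
      _ ≤ _ := mul_le_mul_of_nonneg_right hKδ.le (by positivity)
      _ ≤ A + δ := h.trans hupp.2.le

theorem tendsto_of_forall_tendsto_movingAverage {A : ℝ}
    (hφ : MonotoneOn (fun u ↦ φ u * Real.exp u) (Ioi 0)) (h0 : ∀ u ∈ Ioi 0, 0 ≤ φ u)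
    (hM : ∀ u ∈ Ioi 0, φ u ≤ M)
    (hmean : ∀ K, IsBandlimitedKernel K → Tendsto (movingAverage K φ) atTop (𝓝 A)) :
    Tendsto φ atTop (𝓝 A) := by
  have hbounds {δ : ℝ} := eventually_mem_Icc_of_forall_tendsto_movingAverage (δ := δ) hφ h0 hM hmean
  have hδ_small : ∀ᶠ δ : ℝ in 𝓝[>] 0, δ ∈ Ioo (0 : ℝ) 1 := Ioo_mem_nhdsGT one_pos
  have hlow : Tendsto (fun δ : ℝ ↦ (A - δ - M * δ) * Real.exp (-(2 * δ))) (𝓝[>] 0) (𝓝 A) := by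
    refine tendsto_nhdsWithin_of_tendsto_nhds ?_
    have : Continuous fun δ : ℝ ↦ (A - δ - M * δ) * Real.exp (-(2 * δ)) := by fun_prop
    simpa using this.tendsto 0
  have hupp : Tendsto (fun δ : ℝ ↦ (A + δ) * Real.exp (2 * δ) / (1 - δ)) (𝓝[>] 0) (𝓝 A) := by
    refine tendsto_nhdsWithin_of_tendsto_nhds ?_
    have : ContinuousAt (fun δ : ℝ ↦ (A + δ) * Real.exp (2 * δ) / (1 - δ)) 0 :=
      ContinuousAt.div (by fun_prop) (by fun_prop) (by norm_num)
    simpa using this.tendsto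
  refine tendsto_order.2 ⟨fun a ha ↦ ?_, fun b hb ↦ ?_⟩
  · obtain ⟨δ, haδ, hδ⟩ := ((hlow.eventually_const_lt ha).and hδ_small).exists
    exact (hbounds hδ.1 hδ.2).mono fun u hu ↦ haδ.trans_le hu.1
  · obtain ⟨δ, hδb, hδ⟩ := ((hupp.eventually_lt_const hb).and hδ_small).exists
    exact (hbounds hδ.1 hδ.2).mono fun u hu ↦ hu.2.trans_lt hδb

theorem tendsto_of_laplaceTransform_sub_const_eqOn {G : ℂ → ℂ} {A : ℝ}
    (hφ : MonotoneOn (fun u ↦ φ u * Real.exp u) (Ioi 0)) (h0 : ∀ u ∈ Ioi 0, 0 ≤ φ u)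
    (hM : ∀ u ∈ Ioi 0, φ u ≤ M) (hG : ContinuousOn G {z | 0 ≤ z.re})
    (hφG : EqOn (laplaceTransform fun u ↦ ((φ u - A : ℝ) : ℂ)) G {z | 0 < z.re}) :
    Tendsto φ atTop (𝓝 A) :=
  tendsto_of_forall_tendsto_movingAverage hφ h0 hM fun _ hK ↦
    hK.tendsto_movingAverage (aestronglyMeasurable_of_monotoneOn_mul_exp measurableSet_Ioi hφ)
      (fun u hu ↦ (abs_of_nonneg (h0 u hu)).trans_le (hM u hu)) hG hφG

end SlowlyDecreasing

/-! ### The Wiener–Ikehara theorem -/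

theorem laplaceTransform_const (A : ℂ) {z : ℂ} (hz : 0 < z.re) :
    laplaceTransform (fun _ ↦ A) z = A / z := by
  rw [laplaceTransform, integral_const_mul, integral_exp_mul_complex_Ioi (by simpa using hz)]
  simp [div_eq_mul_inv, inv_neg]

theorem laplaceTransform_sub_const {f : ℝ → ℂ} {M : ℝ} {z : ℂ} (A : ℂ) (hz : 0 < z.re)
    (hf : AEStronglyMeasurable f (volume.restrict (Ioi 0))) (hM : ∀ u ∈ Ioi 0, ‖f u‖ ≤ M) :
    laplaceTransform (fun u ↦ f u - A) z = laplaceTransform f z - A / z := by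
  rw [← laplaceTransform_const A hz, laplaceTransform, laplaceTransform, laplaceTransform,
    ← integral_sub (integrableOn_mul_exp_Ioi hz hf hM)
      ((integrableOn_exp_mul_complex_Ioi (by simpa using hz) 0).const_mul A)]
  simp_rw [sub_mul]

/-- The summatory function `x ↦ ∑ f(k)` over the integers `1 ≤ k ≤ x`. -/
noncomputable def summatory (f : ℕ → ℝ) (x : ℝ) : ℝ :=
  ∑ k ∈ Finset.Icc 1 ⌊x⌋₊, f k

section SummatoryFunctions

variable {f : ℕ → ℝ}

theorem summatory_nonneg (hf : 0 ≤ f) (x : ℝ) : 0 ≤ summatory f x :=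
  Finset.sum_nonneg fun k _ ↦ hf k

theorem summatory_mono (hf : 0 ≤ f) : Monotone (summatory f) := fun _ _ hxy ↦
  Finset.sum_le_sum_of_subset_of_nonneg (Finset.Icc_subset_Icc_right (Nat.floor_mono hxy))
    fun k _ _ ↦ hf k

theorem exists_summatory_le_mul
    (hO : (fun n : ℕ ↦ ∑ k ∈ Finset.Icc 1 n, f k) =O[atTop] fun n : ℕ ↦ (n : ℝ)) :
    ∃ M, ∀ x, 0 ≤ x → summatory f x ≤ M * x := by
  obtain ⟨M, hM⟩ := (isBigO_nat_atTop_iff fun n hn ↦ by simp_all).1 hO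
  refine ⟨|M|, fun x hx ↦ (Real.le_norm_self _).trans ((hM ⌊x⌋₊).trans ?_)⟩
  rw [Real.norm_natCast]
  exact mul_le_mul (le_abs_self M) (Nat.floor_le hx) (by positivity) (abs_nonneg M)

/-- The mean value `x⁻¹ ∑_{k ≤ x} f(k)` on the logarithmic scale `x = e^u`. -/
noncomputable def logScaleMean (f : ℕ → ℝ) (u : ℝ) : ℝ :=
  summatory f (Real.exp u) * Real.exp (-u)

theorem logScaleMean_mul_exp (f : ℕ → ℝ) (u : ℝ) :
    logScaleMean f u * Real.exp u = summatory f (Real.exp u) := by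
  rw [logScaleMean, mul_assoc, ← Real.exp_add, neg_add_cancel, Real.exp_zero, mul_one]

theorem logScaleMean_log (f : ℕ → ℝ) {x : ℝ} (hx : 0 < x) :
    logScaleMean f (Real.log x) = summatory f x / x := by
  rw [logScaleMean, Real.exp_neg, Real.exp_log hx, div_eq_mul_inv]

theorem logScaleMean_nonneg (hf : 0 ≤ f) (u : ℝ) : 0 ≤ logScaleMean f u :=
  mul_nonneg (summatory_nonneg hf _) (Real.exp_pos _).le

theorem monotone_logScaleMean_mul_exp (hf : 0 ≤ f) :
    Monotone fun u ↦ logScaleMean f u * Real.exp u := by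
  simpa only [logScaleMean_mul_exp] using! (summatory_mono hf).comp Real.exp_monotone

theorem exists_logScaleMean_le
    (hO : (fun n : ℕ ↦ ∑ k ∈ Finset.Icc 1 n, f k) =O[atTop] fun n : ℕ ↦ (n : ℝ)) :
    ∃ M, ∀ u, logScaleMean f u ≤ M := by
  obtain ⟨M, hM⟩ := exists_summatory_le_mul hO
  refine ⟨M, fun u ↦ le_of_mul_le_mul_right ?_ (Real.exp_pos u)⟩
  rw [logScaleMean_mul_exp]
  exact hM _ (Real.exp_pos u).le

theorem LSeries_eq_mul_laplaceTransform_logScaleMean (hf : 0 ≤ f)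
    (hO : (fun n : ℕ ↦ ∑ k ∈ Finset.Icc 1 n, f k) =O[atTop] fun n : ℕ ↦ (n : ℝ))
    {s : ℂ} (hs : 1 < s.re) :
    LSeries (fun n ↦ f n) s = s * laplaceTransform (fun u ↦ (logScaleMean f u : ℂ)) (s - 1) := by
  rw [LSeries_eq_mul_integral_of_nonneg f zero_le_one hs (by simpa using hO) hf,
    ← Real.exp_zero, ← integral_comp_exp_Ioi, laplaceTransform]
  congr! 3 with u
  rw [Complex.cpow_def_of_ne_zero (by simp [Complex.exp_ne_zero]),
    ← Complex.ofReal_log (Real.exp_pos _).le, Real.log_exp, Complex.real_smul, logScaleMean,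
    summatory]
  push_cast
  rw [mul_left_comm, mul_assoc, ← Complex.exp_add, ← Complex.exp_add]
  ring_nf

theorem laplaceTransform_logScaleMean_sub_const (hf : 0 ≤ f)
    (hO : (fun n : ℕ ↦ ∑ k ∈ Finset.Icc 1 n, f k) =O[atTop] fun n : ℕ ↦ (n : ℝ)) (A : ℝ) {z : ℂ}
    (hz : 0 < z.re) :
    laplaceTransform (fun u ↦ ((logScaleMean f u - A : ℝ) : ℂ)) z =
      (LSeries (fun n ↦ f n) (1 + z) - A / z - A) / (1 + z) := by
  obtain ⟨M, hM⟩ := exists_logScaleMean_le hO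
  have hs : 1 < (1 + z).re := by simpa using hz
  have hz0 : z ≠ 0 := Complex.ne_zero_of_re_pos hz
  have hs0 : 1 + z ≠ 0 := Complex.ne_zero_of_re_pos (one_pos.trans hs)
  have hmeas : AEStronglyMeasurable (fun u ↦ (logScaleMean f u : ℂ)) (volume.restrict (Ioi 0)) :=
    Complex.continuous_ofReal.comp_aestronglyMeasurable <|
      aestronglyMeasurable_of_monotoneOn_mul_exp measurableSet_Ioi
        ((monotone_logScaleMean_mul_exp hf).monotoneOn _)
  have hbound : ∀ u ∈ Ioi 0, ‖(logScaleMean f u : ℂ)‖ ≤ M := fun u _ ↦ by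
    rw [Complex.norm_real, Real.norm_of_nonneg (logScaleMean_nonneg hf u)]
    exact hM u
  simp_rw [Complex.ofReal_sub]
  rw [laplaceTransform_sub_const A hz hmeas hbound,
    LSeries_eq_mul_laplaceTransform_logScaleMean hf hO hs, add_sub_cancel_left]
  field_simp
  ring

theorem wienerIkehara_tendsto_summatory_div {A : ℝ} {F : ℂ → ℂ} (hf : 0 ≤ f)
    (hO : (fun n : ℕ ↦ ∑ k ∈ Finset.Icc 1 n, f k) =O[atTop] fun n : ℕ ↦ (n : ℝ))
    (hF : ContinuousOn F {s | 1 ≤ s.re})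
    (hFL : EqOn F (fun s ↦ LSeries (fun n ↦ f n) s - A / (s - 1)) {s | 1 < s.re}) :
    Tendsto (fun x ↦ summatory f x / x) atTop (𝓝 A) := by
  obtain ⟨M, hM⟩ := exists_logScaleMean_le hO
  let G : ℂ → ℂ := fun z ↦ (F (1 + z) - A) / (1 + z)
  have hG : ContinuousOn G {z | 0 ≤ z.re} := by
    have hmaps : MapsTo (fun z : ℂ ↦ 1 + z) {z | 0 ≤ z.re} {s | 1 ≤ s.re} := fun z hz ↦ by
      simpa using hz
    refine ((hF.comp (by fun_prop) hmaps).sub continuousOn_const).div (by fun_prop) fun z hz ↦ ?_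
    exact Complex.ne_zero_of_re_pos (one_pos.trans_le (hmaps hz))
  have hlaplace : EqOn (laplaceTransform fun u ↦ ((logScaleMean f u - A : ℝ) : ℂ)) G
      {z | 0 < z.re} := by
    intro z (hz : 0 < z.re)
    have hs : 1 < (1 + z).re := by simpa using hz
    simp_rw [G, hFL hs, add_sub_cancel_left]
    exact laplaceTransform_logScaleMean_sub_const hf hO A hz
  have hlim : Tendsto (logScaleMean f) atTop (𝓝 A) :=
    tendsto_of_laplaceTransform_sub_const_eqOn ((monotone_logScaleMean_mul_exp hf).monotoneOn _)
      (fun u _ ↦ logScaleMean_nonneg hf u) (fun u _ ↦ hM u) hG hlaplace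
  refine (hlim.comp Real.tendsto_log_atTop).congr' ?_
  filter_upwards [eventually_gt_atTop 0] with x hx
  exact logScaleMean_log f hx

end SummatoryFunctions

/-! ### Prime counting -/

section VonMangoldt

open ArithmeticFunction.vonMangoldt

theorem tendsto_summatory_residueClass_div {q : ℕ} [NeZero q] {a : ZMod q} (ha : IsUnit a) :
    Tendsto (fun x ↦ summatory (residueClass a) x / x) atTop (𝓝 (q.totient : ℝ)⁻¹) := by
  refine wienerIkehara_tendsto_summatory_div (residueClass_nonneg a) ?_
    (continuousOn_LFunctionResidueClassAux a) ?_
  · refine .of_bound (Real.log 4 + 4) (.of_forall fun n ↦ ?_)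
    rw [Real.norm_of_nonneg (Finset.sum_nonneg fun k _ ↦ residueClass_nonneg a k),
      Real.norm_natCast]
    calc ∑ k ∈ Finset.Icc 1 n, residueClass a k
      _ ≤ ∑ k ∈ Finset.Icc 1 n, ArithmeticFunction.vonMangoldt k :=
        Finset.sum_le_sum fun k _ ↦ residueClass_le a k
      _ = Chebyshev.psi n := by rw [Chebyshev.psi, Nat.floor_natCast]; rfl
      _ ≤ (Real.log 4 + 4) * n := Chebyshev.psi_le_const_mul_self n.cast_nonneg
  · simpa using eqOn_LFunctionResidueClassAux ha

theorem psi_isEquivalent_id : Chebyshev.psi ~[atTop] id := by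
  refine (isEquivalent_iff_tendsto_one (eventually_ne_atTop 0)).2 ?_
  have hres : (residueClass (1 : ZMod 1) : ℕ → ℝ) = ArithmeticFunction.vonMangoldt :=
    funext fun n ↦ indicator_of_mem (s := {n : ℕ | (n : ZMod 1) = 1}) (Subsingleton.elim _ _) _
  have h := tendsto_summatory_residueClass_div (q := 1) isUnit_one
  rw [hres] at h
  simpa using! h

theorem theta_isEquivalent_id : Chebyshev.theta ~[atTop] id := by
  have hsqrt : Real.sqrt =o[atTop] (id : ℝ → ℝ) := by
    refine isLittleO_of_tendsto' ((eventually_ne_atTop 0).mono fun x hx h ↦ absurd h hx) ?_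
    simpa only [id, Real.sqrt_div_self'] using Real.tendsto_sqrt_atTop.const_div_atTop 1
  have h := Chebyshev.isBigO_psi_sub_theta_sqrt.trans_isLittleO hsqrt
  simpa using! psi_isEquivalent_id.sub_isLittleO h

theorem primeCounting_floor_isEquivalent_div_log :
    (fun x : ℝ ↦ (Nat.primeCounting ⌊x⌋₊ : ℝ)) ~[atTop] fun x ↦ x / Real.log x := by
  have herr : (fun x : ℝ ↦ x / Real.log x ^ 2) =o[atTop] fun x ↦ x / Real.log x := by
    have hlog : (fun x ↦ (Real.log x)⁻¹) =o[atTop] fun _ ↦ (1 : ℝ) :=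
      (isLittleO_one_iff ℝ).2 Real.tendsto_log_atTop.inv_tendsto_atTop
    refine ((isBigO_refl (fun x ↦ x / Real.log x) atTop).mul_isLittleO hlog).congr ?_ ?_ <;>
      intro x <;> ring
  have hmain : (fun x ↦ Chebyshev.theta x / Real.log x) ~[atTop] fun x ↦ x / Real.log x :=
    theta_isEquivalent_id.div .refl
  simpa [Pi.add_def] using hmain.add_isLittleO
    (Chebyshev.primeCounting_sub_theta_div_log_isBigO.trans_isLittleO herr)

end VonMangoldt

theorem primePi_eq_primeCounting : primePi = Nat.primeCounting := by
  ext n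
  rw [primePi, Nat.primeCounting, Nat.primeCounting', Nat.count_eq_card_filter_range]
  congr 1
  ext k
  simp

end

/-- π(n)/n = (1/ln n)(1 + o(1)), i.e. π(n)·(ln n)/n → 1 as n → ∞. -/
theorem primePi_density_asymptotic :
    Tendsto (fun n : ℕ => (primePi n : ℝ) * Real.log n / n) atTop (nhds 1) := by
  have hne : ∀ᶠ x : ℝ in atTop, x / Real.log x ≠ 0 :=
    (eventually_gt_atTop 1).mono fun x hx ↦ (div_pos (one_pos.trans hx) (Real.log_pos hx)).ne'
  have h :=
    (Asymptotics.isEquivalent_iff_tendsto_one hne).1 primeCounting_floor_isEquivalent_div_log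
  refine (h.comp tendsto_natCast_atTop_atTop).congr fun n ↦ ?_
  simp [primePi_eq_primeCounting, div_div_eq_mul_div]
end

section
/- Hardy–Ramanujan theorem: for every ε > 0, (1/n)·#{m : 1 ≤ m ≤ n, |ω(m) - ln ln n| ≤ (ln ln n)^{1/2 + ε}} → 1 as n → ∞. -/
open Filter
open scoped Classical

/-!
Turán's variance argument. For a finite set `P` of pairwise coprime numbers and
`S = ∑ d ∈ P, 1 / d`, the events `d ∣ m` are nearly independent as `m` ranges over `1, …, n`, so
the number of `d ∈ P` dividing `m` has mean close to `S` and variance `O(S)`. For the primes up to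
`n`, Mertens' theorems give `S = log log n + O(1)`: comparing Legendre's formula for `log n!` with
Stirling's yields `∑ log p / p = log n + O(1)`, and partial summation removes the weight `log p`.
Chebyshev's inequality then concentrates `ω` around `log log n` on any scale which is large
compared with `√(log log n)`.
-/

open Asymptotics Finset Real
open scoped Nat Topology

section Divisibility

lemma sub_one_le_cast_div (n d : ℕ) : (n : ℝ) / d - 1 ≤ (n / d : ℕ) := by
  rw [← Nat.floor_div_eq_div (K := ℝ)]
  exact (Nat.sub_one_lt_floor _).le

lemma sum_card_filter_dvd {ι : Type*} (s : Finset ι) (f : ι → ℕ) (n : ℕ) :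
    ∑ m ∈ Icc 1 n, #{i ∈ s | f i ∣ m} = ∑ i ∈ s, n / f i := by
  have card_multiples (d : ℕ) : #{m ∈ Icc 1 n | d ∣ m} = n / d :=
    Nat.Ioc_filter_dvd_card_eq_div n d
  rw [sum_congr rfl fun i _ ↦ (card_multiples (f i)).symm]
  exact sum_card_bipartiteAbove_eq_sum_card_bipartiteBelow fun m i ↦ f i ∣ m

lemma sum_card_filter_dvd_sq (P : Finset ℕ) (n : ℕ) :
    ∑ m ∈ Icc 1 n, #{d ∈ P | d ∣ m} ^ 2 = ∑ d ∈ P, ∑ e ∈ P, n / d.lcm e := by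
  rw [← sum_product', ← sum_card_filter_dvd (P ×ˢ P) fun x ↦ x.1.lcm x.2]
  refine sum_congr rfl fun m _ ↦ ?_
  rw [sq, ← card_product, ← filter_product]
  simp only [Nat.lcm_dvd_iff]

lemma mul_sum_inv_sub_card_le_sum_card_filter_dvd (P : Finset ℕ) (n : ℕ) :
    n * ∑ d ∈ P, (d : ℝ)⁻¹ - #P ≤ ∑ m ∈ Icc 1 n, (#{d ∈ P | d ∣ m} : ℝ) := by
  calc n * ∑ d ∈ P, (d : ℝ)⁻¹ - #P = ∑ d ∈ P, ((n : ℝ) / d - 1) := by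
        simp [mul_sum, div_eq_mul_inv]
    _ ≤ ∑ d ∈ P, ((n / d : ℕ) : ℝ) := sum_le_sum fun d _ ↦ sub_one_le_cast_div n d
    _ = ∑ m ∈ Icc 1 n, (#{d ∈ P | d ∣ m} : ℝ) :=
        mod_cast (sum_card_filter_dvd P (fun d ↦ d) n).symm

lemma sum_card_filter_dvd_sq_le {P : Finset ℕ} (hP : (P : Set ℕ).Pairwise Nat.Coprime) (n : ℕ) :
    ∑ m ∈ Icc 1 n, (#{d ∈ P | d ∣ m} : ℝ) ^ 2
      ≤ n * (∑ d ∈ P, (d : ℝ)⁻¹) ^ 2 + n * ∑ d ∈ P, (d : ℝ)⁻¹ := by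
  have pair_le : ∀ d ∈ P, ∀ e ∈ P, ((n / d.lcm e : ℕ) : ℝ)
      ≤ n * ((d : ℝ)⁻¹ * (e : ℝ)⁻¹) + if d = e then n * (d : ℝ)⁻¹ else 0 := by
    intro d hd e he
    refine Nat.cast_div_le.trans ?_
    split_ifs with hde
    · subst hde
      rw [Nat.lcm_self, div_eq_mul_inv]
      exact le_add_of_nonneg_left (by positivity)
    · rw [(hP hd he hde).lcm_eq_mul, Nat.cast_mul, div_eq_mul_inv, mul_inv, add_zero]
  have diagonal : ∑ d ∈ P, ∑ e ∈ P, (if d = e then n * (d : ℝ)⁻¹ else 0)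
      = n * ∑ d ∈ P, (d : ℝ)⁻¹ := by
    rw [mul_sum]
    exact sum_congr rfl fun d hd ↦ by rw [sum_ite_eq, if_pos hd]
  calc ∑ m ∈ Icc 1 n, (#{d ∈ P | d ∣ m} : ℝ) ^ 2
      = ∑ d ∈ P, ∑ e ∈ P, ((n / d.lcm e : ℕ) : ℝ) := mod_cast sum_card_filter_dvd_sq P n
    _ ≤ ∑ d ∈ P, ∑ e ∈ P,
          (n * ((d : ℝ)⁻¹ * (e : ℝ)⁻¹) + if d = e then n * (d : ℝ)⁻¹ else 0) :=
        sum_le_sum fun d hd ↦ sum_le_sum fun e he ↦ pair_le d hd e he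
    _ = n * (∑ d ∈ P, (d : ℝ)⁻¹) ^ 2 + n * ∑ d ∈ P, (d : ℝ)⁻¹ := by
        simp_rw [sum_add_distrib, diagonal, sq, sum_mul_sum, mul_sum]

theorem sum_sq_card_filter_dvd_sub_sum_inv_le {P : Finset ℕ}
    (hP : (P : Set ℕ).Pairwise Nat.Coprime) (n : ℕ) :
    ∑ m ∈ Icc 1 n, ((#{d ∈ P | d ∣ m} : ℝ) - ∑ d ∈ P, (d : ℝ)⁻¹) ^ 2
      ≤ (n + 2 * #P) * ∑ d ∈ P, (d : ℝ)⁻¹ := by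
  have first_moment := mul_sum_inv_sub_card_le_sum_card_filter_dvd P n
  have second_moment := sum_card_filter_dvd_sq_le hP n
  have sum_inv_nonneg : 0 ≤ ∑ d ∈ P, (d : ℝ)⁻¹ := sum_nonneg fun d _ ↦ by positivity
  set S := ∑ d ∈ P, (d : ℝ)⁻¹
  have expand : ∑ m ∈ Icc 1 n, ((#{d ∈ P | d ∣ m} : ℝ) - S) ^ 2 =
      ∑ m ∈ Icc 1 n, (#{d ∈ P | d ∣ m} : ℝ) ^ 2
        - 2 * S * ∑ m ∈ Icc 1 n, (#{d ∈ P | d ∣ m} : ℝ) + n * S ^ 2 := by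
    simp only [sub_sq, sum_add_distrib, sum_sub_distrib, mul_sum, sum_const, Nat.card_Icc,
      add_tsub_cancel_right, nsmul_eq_mul, mul_right_comm _ _ S]
  rw [expand]
  linarith [mul_le_mul_of_nonneg_left first_moment sum_inv_nonneg]

end Divisibility

section MertensFirst

lemma primeFactors_factorial (n : ℕ) : (n !).primeFactors = n.primesLE := by
  ext p
  rw [Nat.mem_primeFactors_of_ne_zero n.factorial_ne_zero, Nat.mem_primesLE, and_comm]
  exact and_congr_left fun hp ↦ hp.dvd_factorial

lemma log_factorial_eq_sum_primesLE (n : ℕ) :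
    log n ! = ∑ p ∈ n.primesLE, (n !).factorization p * log p := by
  rw [log_nat_eq_sum_factorization, Finsupp.sum, Nat.support_factorization, primeFactors_factorial]

lemma div_le_factorization_factorial {p : ℕ} (hp : p.Prime) (n : ℕ) :
    n / p ≤ (n !).factorization p := by
  rw [Nat.factorization_factorial hp (show p.log n < p.log n + 2 by lia)]
  simpa using single_le_sum_of_canonicallyOrdered (f := fun i ↦ n / p ^ i)
    (show 1 ∈ Ico 1 (p.log n + 2) by simp)

lemma cast_factorization_factorial_le_div_sub_one {p : ℕ} (hp : p.Prime) (n : ℕ) :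
    ((n !).factorization p : ℝ) ≤ n / (p - 1) := by
  have le_div := (Nat.cast_le (α := ℝ)).2 (Nat.factorization_factorial_le_div_pred hp n)
  rw [← Nat.cast_pred hp.pos]
  exact le_div.trans Nat.cast_div_le

lemma sum_log_div_primesLE_le {n : ℕ} (hn : n ≠ 0) :
    ∑ p ∈ n.primesLE, log p / p ≤ log n + log 4 := by
  have log_factorial_ge :
      n * ∑ p ∈ n.primesLE, log p / p - Chebyshev.theta n ≤ log n ! := by
    rw [log_factorial_eq_sum_primesLE, Chebyshev.theta_eq_sum_primesLE_log, mul_sum,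
      ← sum_sub_distrib]
    refine sum_le_sum fun p hp ↦ ?_
    calc n * (log p / p) - log p = ((n : ℝ) / p - 1) * log p := by ring
      _ ≤ (n !).factorization p * log p := by
        gcongr
        exact (sub_one_le_cast_div n p).trans
          (mod_cast div_le_factorization_factorial (Nat.prime_of_mem_primesLE hp) n)
  have log_factorial_le : log n ! ≤ n * log n := by
    rw [← log_pow]
    exact log_le_log (by positivity) (mod_cast n.factorial_le_pow)
  have theta_le := Chebyshev.theta_le_log4_mul_x n.cast_nonneg
  refine le_of_mul_le_mul_left ?_ (show (0 : ℝ) < n by positivity)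
  linarith

lemma log_div_mul_sub_one_nonneg (n : ℕ) : 0 ≤ log n / (n * (n - 1)) := by
  rcases n.eq_zero_or_pos with rfl | hn
  · simp
  · have : (0 : ℝ) ≤ n - 1 := sub_nonneg.2 (mod_cast hn)
    positivity

lemma summable_log_div_mul_sub_one : Summable fun n : ℕ ↦ log n / (n * (n - 1)) := by
  refine .of_nonneg_of_le log_div_mul_sub_one_nonneg (fun n ↦ ?_)
    ((summable_one_div_nat_rpow.2 (show (1 : ℝ) < 3 / 2 by norm_num)).mul_left 4)
  rcases lt_or_ge n 2 with hn | hn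
  · interval_cases n <;> simp
  have two_le : (2 : ℝ) ≤ n := mod_cast hn
  have log_le : log n ≤ 2 * (n : ℝ) ^ (1 / 2 : ℝ) := by
    have := log_natCast_le_rpow_div n (show (0 : ℝ) < 1 / 2 by norm_num)
    linarith
  have rpow_mul_rpow : (n : ℝ) ^ (1 / 2 : ℝ) * (n : ℝ) ^ (3 / 2 : ℝ) = n ^ 2 := by
    rw [← rpow_add (by positivity), ← rpow_natCast]
    norm_num
  rw [mul_one_div, div_le_div_iff₀ (by nlinarith) (by positivity)]
  calc log n * (n : ℝ) ^ (3 / 2 : ℝ)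
      ≤ 2 * (n : ℝ) ^ (1 / 2 : ℝ) * (n : ℝ) ^ (3 / 2 : ℝ) := by gcongr
    _ = 2 * n ^ 2 := by rw [mul_assoc, rpow_mul_rpow]
    _ ≤ 4 * (n * (n - 1)) := by nlinarith

lemma log_sub_le_sum_log_div_primesLE {n : ℕ} (hn : n ≠ 0) :
    log n - (1 + ∑' k : ℕ, log k / (k * (k - 1))) ≤ ∑ p ∈ n.primesLE, log p / p := by
  have tail_le : ∑ p ∈ n.primesLE, log p / (p * (p - 1)) ≤ ∑' k : ℕ, log k / (k * (k - 1)) :=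
    summable_log_div_mul_sub_one.sum_le_tsum _ fun k _ ↦ log_div_mul_sub_one_nonneg k
  have log_factorial_le : log n ! ≤
      n * (∑ p ∈ n.primesLE, log p / p + ∑ p ∈ n.primesLE, log p / (p * (p - 1))) := by
    rw [log_factorial_eq_sum_primesLE, ← sum_add_distrib, mul_sum]
    refine sum_le_sum fun p hp ↦ ?_
    have hp := Nat.prime_of_mem_primesLE hp
    have one_lt : (1 : ℝ) < p := mod_cast hp.one_lt
    calc (n !).factorization p * log p
        ≤ n / (p - 1) * log p := by
          gcongr
          exact cast_factorization_factorial_le_div_sub_one hp n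
      _ = n * (log p / p + log p / (p * (p - 1))) := by
        have : (p : ℝ) - 1 ≠ 0 := by linarith
        field_simp
        ring
  have log_factorial_ge : n * log n - n ≤ log n ! := by
    have := Stirling.le_log_factorial_stirling hn
    have : 0 ≤ log (2 * π) := log_nonneg (by linarith [pi_gt_three])
    linarith [log_natCast_nonneg n]
  suffices log n - 1 ≤ ∑ p ∈ n.primesLE, log p / p + ∑ p ∈ n.primesLE, log p / (p * (p - 1)) by
    linarith
  refine le_of_mul_le_mul_left ?_ (show (0 : ℝ) < n by positivity)
  linarith

theorem isBigO_sum_log_div_primesLE_sub_log :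
    (fun n : ℕ ↦ ∑ p ∈ n.primesLE, log p / p - log n) =O[atTop] fun _ ↦ (1 : ℝ) := by
  set C := 1 + ∑' k : ℕ, log k / (k * (k - 1))
  refine .of_bound (max C (log 4)) ?_
  filter_upwards [eventually_ne_atTop 0] with n hn
  rw [norm_one, mul_one, norm_eq_abs, abs_le]
  constructor
  · linarith [log_sub_le_sum_log_div_primesLE hn, le_max_left C (log 4)]
  · linarith [sum_log_div_primesLE_le hn, le_max_right C (log 4)]

end MertensFirst

section MertensSecond

lemma isBigO_one_of_norm_sub_succ_le {E : Type*} [SeminormedAddCommGroup E] {F : ℕ → E}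
    {g : ℕ → ℝ} (hg : ∀ n, 0 ≤ g n) (hF : ∀ᶠ n in atTop, ‖F (n + 1) - F n‖ ≤ g n - g (n + 1)) :
    F =O[atTop] fun _ ↦ (1 : ℝ) := by
  obtain ⟨N, hN⟩ := eventually_atTop.1 hF
  refine .of_bound (‖F N‖ + g N) ?_
  filter_upwards [eventually_ge_atTop N] with n hn
  have norm_sub_le : ‖F N - F n‖ ≤ g N - g n := by
    rw [← dist_eq_norm, ← neg_sub (g n), ← sum_Ico_sub g hn, ← sum_neg_distrib]
    refine dist_le_Ico_sum_of_dist_le hn fun hk _ ↦ ?_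
    rw [dist_comm, dist_eq_norm, neg_sub]
    exact hN _ hk
  rw [norm_one, mul_one]
  linarith [norm_le_insert (F N) (F n), hg n]

lemma abs_one_sub_div_sub_log_sub_log_le {a b : ℝ} (ha : 0 < a) (hb : 0 < b) :
    |1 - a / b - (log b - log a)| ≤ (b - a) * (a⁻¹ - b⁻¹) := by
  have upper : log b - log a ≤ b / a - 1 := by
    rw [← log_div hb.ne' ha.ne']
    exact log_le_sub_one_of_pos (by positivity)
  have lower : log a - log b ≤ a / b - 1 := by
    rw [← log_div ha.ne' hb.ne']
    exact log_le_sub_one_of_pos (by positivity)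
  have gap : (b - a) * (a⁻¹ - b⁻¹) = b / a - 1 - (1 - a / b) := by field_simp
  rw [gap, abs_le]
  constructor <;> linarith

lemma log_succ_sub_log_le_one {n : ℕ} (hn : n ≠ 0) : log (n + 1 : ℕ) - log n ≤ 1 := by
  rw [← log_div (by positivity) (by positivity)]
  refine (log_le_sub_one_of_pos (by positivity)).trans ?_
  rw [Nat.cast_add_one, add_div, div_self (by positivity), add_sub_cancel_left]
  exact div_le_one_of_le₀ (mod_cast Nat.one_le_iff_ne_zero.2 hn) n.cast_nonneg

lemma isBigO_div_log_natCast {E : ℕ → ℝ} (hE : E =O[atTop] fun _ ↦ (1 : ℝ)) :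
    (fun n ↦ E n / log n) =O[atTop] fun _ ↦ (1 : ℝ) := by
  have log_inv : (fun n : ℕ ↦ (log n)⁻¹) =O[atTop] fun _ ↦ (1 : ℝ) :=
    (tendsto_inv_atTop_zero.comp
      (tendsto_log_atTop.comp tendsto_natCast_atTop_atTop)).isBigO_one ℝ
  exact (hE.mul log_inv).congr (fun n ↦ (div_eq_mul_inv _ _).symm) fun _ ↦ one_mul 1

-- The summands with `k ≤ 1` vanish, since `log k = 0` and `x / 0 = 0`.
theorem isBigO_sum_div_log_sub_log_log {c : ℕ → ℝ}
    (hc : (fun n ↦ ∑ k ∈ range (n + 1), c k - log n) =O[atTop] fun _ ↦ (1 : ℝ)) :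
    (fun n ↦ ∑ k ∈ range (n + 1), c k / log k - log (log n)) =O[atTop] fun _ ↦ (1 : ℝ) := by
  set E : ℕ → ℝ := fun n ↦ ∑ k ∈ range (n + 1), c k - log n with hE
  obtain ⟨C, hC, hEC⟩ := hc.exists_nonneg
  suffices (fun n ↦ ∑ k ∈ range (n + 1), c k / log k - log (log n) - E n / log n)
      =O[atTop] fun _ ↦ (1 : ℝ) by
    simpa using this.add (isBigO_div_log_natCast hc)
  refine isBigO_one_of_norm_sub_succ_le (g := fun n ↦ (1 + C) * (log n)⁻¹)
    (fun n ↦ by have := log_natCast_nonneg n; positivity) ?_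
  filter_upwards [hEC.bound, eventually_ge_atTop 2] with n hEn hn
  have increment : c (n + 1) = E (n + 1) - E n + (log (n + 1 : ℕ) - log n) := by
    simp only [hE, sum_range_succ c (n + 1)]
    ring
  have ha : 0 < log n := log_pos (mod_cast hn)
  have hab : log n ≤ log (n + 1 : ℕ) := log_le_log (by positivity) (by simp)
  have log_gap := log_succ_sub_log_le_one (show n ≠ 0 by lia)
  rw [sum_range_succ _ (n + 1), increment]
  rw [norm_one, mul_one, norm_eq_abs] at hEn
  generalize E (n + 1) = e', E n = e, log (n + 1 : ℕ) = b, log n = a at *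
  have inv_gap : 0 ≤ a⁻¹ - b⁻¹ := sub_nonneg.2 (inv_anti₀ ha hab)
  have hb : 0 < b := ha.trans_le hab
  have difference : ∑ k ∈ range (n + 1), c k / log k + (e' - e + (b - a)) / b - log b - e' / b
      - (∑ k ∈ range (n + 1), c k / log k - log a - e / a)
      = 1 - a / b - (log b - log a) + e * (a⁻¹ - b⁻¹) := by
    field_simp
    ring
  calc ‖_‖ = |1 - a / b - (log b - log a) + e * (a⁻¹ - b⁻¹)| := by rw [difference, norm_eq_abs]
    _ ≤ |1 - a / b - (log b - log a)| + |e| * (a⁻¹ - b⁻¹) := by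
      refine (abs_add_le _ _).trans_eq ?_
      rw [abs_mul, abs_of_nonneg inv_gap]
    _ ≤ 1 * (a⁻¹ - b⁻¹) + C * (a⁻¹ - b⁻¹) := by
      gcongr
      exact (abs_one_sub_div_sub_log_sub_log_le ha hb).trans (by gcongr)
    _ = (1 + C) * a⁻¹ - (1 + C) * b⁻¹ := by ring

theorem isBigO_sum_inv_primesLE_sub_log_log :
    (fun n : ℕ ↦ ∑ p ∈ n.primesLE, (p : ℝ)⁻¹ - log (log n)) =O[atTop] fun _ ↦ (1 : ℝ) := by
  have weight_div_log (k : ℕ) :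
      (if k.Prime then log k / k else 0) / log k = if k.Prime then (k : ℝ)⁻¹ else 0 := by
    split_ifs with hk
    · have : log k ≠ 0 := (log_pos (mod_cast hk.one_lt)).ne'
      field_simp
    · exact zero_div _
  have mertens_first := isBigO_sum_log_div_primesLE_sub_log
  simp_rw [Nat.primesLE_eq_filter_range, sum_filter] at mertens_first ⊢
  simpa only [weight_div_log] using isBigO_sum_div_log_sub_log_log mertens_first

end MertensSecond

section Turan

lemma tendsto_log_log_natCast_atTop : Tendsto (fun n : ℕ ↦ log (log n)) atTop atTop :=
  tendsto_log_atTop.comp (tendsto_log_atTop.comp tendsto_natCast_atTop_atTop)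

lemma primeFactors_eq_filter_primesLE {m n : ℕ} (hm : m ∈ Icc 1 n) :
    m.primeFactors = {p ∈ n.primesLE | p ∣ m} := by
  obtain ⟨hm0, hmn⟩ := mem_Icc.1 hm
  ext p
  simp only [Nat.mem_primeFactors, mem_filter, Nat.mem_primesLE]
  constructor
  · rintro ⟨hp, hpm, _⟩
    exact ⟨⟨(Nat.le_of_dvd hm0 hpm).trans hmn, hp⟩, hpm⟩
  · rintro ⟨⟨_, hp⟩, hpm⟩
    exact ⟨hp, hpm, by lia⟩

lemma sum_sq_card_primeFactors_sub_sum_inv_le (n : ℕ) :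
    ∑ m ∈ Icc 1 n, ((#m.primeFactors : ℝ) - ∑ p ∈ n.primesLE, (p : ℝ)⁻¹) ^ 2
      ≤ 3 * n * ∑ p ∈ n.primesLE, (p : ℝ)⁻¹ := by
  have coprime : (n.primesLE : Set ℕ).Pairwise Nat.Coprime := fun p hp q hq hpq ↦
    (Nat.coprime_primes (Nat.prime_of_mem_primesLE hp) (Nat.prime_of_mem_primesLE hq)).2 hpq
  have card_le : (#n.primesLE : ℝ) ≤ n := by
    rw [Nat.primesLE_eq_filter_Icc_one]
    exact_mod_cast (card_filter_le _ _).trans (by simp)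
  rw [sum_congr rfl fun m hm ↦ by rw [primeFactors_eq_filter_primesLE hm]]
  refine (sum_sq_card_filter_dvd_sub_sum_inv_le coprime n).trans ?_
  gcongr
  linarith

theorem isBigO_sum_sq_card_primeFactors_sub_log_log :
    (fun n : ℕ ↦ ∑ m ∈ Icc 1 n, ((#m.primeFactors : ℝ) - log (log n)) ^ 2)
      =O[atTop] fun n : ℕ ↦ n * log (log n) := by
  set S : ℕ → ℝ := fun n ↦ ∑ p ∈ n.primesLE, (p : ℝ)⁻¹
  set L : ℕ → ℝ := fun n ↦ log (log n)
  have one_isBigO : (fun _ ↦ (1 : ℝ)) =O[atTop] L :=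
    (isLittleO_const_left.2 <| .inr <|
      tendsto_norm_atTop_atTop.comp tendsto_log_log_natCast_atTop).isBigO
  have mertens : (fun n ↦ S n - L n) =O[atTop] fun _ ↦ (1 : ℝ) :=
    isBigO_sum_inv_primesLE_sub_log_log
  have S_isBigO : S =O[atTop] L := by
    simpa using (mertens.trans one_isBigO).add (isBigO_refl L atTop)
  have bias_isBigO : (fun n ↦ (S n - L n) ^ 2) =O[atTop] L :=
    ((mertens.pow 2).congr_right fun _ ↦ one_pow 2).trans one_isBigO
  have sum_le (n : ℕ) : ∑ m ∈ Icc 1 n, ((#m.primeFactors : ℝ) - L n) ^ 2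
      ≤ n * (6 * S n + 2 * (S n - L n) ^ 2) := by
    calc ∑ m ∈ Icc 1 n, ((#m.primeFactors : ℝ) - L n) ^ 2
        ≤ ∑ m ∈ Icc 1 n, (2 * ((#m.primeFactors : ℝ) - S n) ^ 2 + 2 * (S n - L n) ^ 2) := by
          refine sum_le_sum fun m _ ↦ ?_
          rw [← sub_add_sub_cancel _ (S n) (L n), ← mul_add]
          exact add_sq_le
      _ = 2 * ∑ m ∈ Icc 1 n, ((#m.primeFactors : ℝ) - S n) ^ 2 + n * (2 * (S n - L n) ^ 2) := by
        simp [sum_add_distrib, mul_sum]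
      _ ≤ n * (6 * S n + 2 * (S n - L n) ^ 2) := by
        linarith [sum_sq_card_primeFactors_sub_sum_inv_le n]
  refine (IsBigO.of_norm_le fun n ↦ ?_).trans <| (isBigO_refl _ _).mul <|
    (S_isBigO.const_mul_left 6).add (bias_isBigO.const_mul_left 2)
  rw [norm_of_nonneg (sum_nonneg fun _ _ ↦ sq_nonneg _)]
  exact sum_le n

end Turan

section Concentration

lemma card_filter_lt_abs_mul_sq_le_sum_sq {ι : Type*} (s : Finset ι) (f : ι → ℝ) {t : ℝ}
    (ht : 0 ≤ t) : #{i ∈ s | t < |f i|} * t ^ 2 ≤ ∑ i ∈ s, f i ^ 2 := by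
  rw [← nsmul_eq_mul]
  refine (card_nsmul_le_sum _ (fun i ↦ f i ^ 2) _ fun i hi ↦ ?_).trans
    (sum_le_sum_of_subset_of_nonneg (filter_subset _ _) fun _ _ _ ↦ sq_nonneg _)
  rw [← sq_abs (f i)]
  gcongr
  exact (mem_filter.1 hi).2.le

lemma one_sub_sum_sq_div_le_card_filter_abs_le_div_card {ι : Type*} {s : Finset ι}
    (hs : s.Nonempty) (f : ι → ℝ) {t : ℝ} (ht : 0 < t) :
    1 - (∑ i ∈ s, f i ^ 2) / (#s * t ^ 2) ≤ (#{i ∈ s | |f i| ≤ t} : ℝ) / #s := by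
  have card_pos : (0 : ℝ) < #s := mod_cast hs.card_pos
  have card_add : (#{i ∈ s | |f i| ≤ t} : ℝ) + #{i ∈ s | t < |f i|} = #s := by
    simp_rw [← not_le]
    exact_mod_cast card_filter_add_card_filter_not _
  have chebyshev : (#{i ∈ s | t < |f i|} : ℝ) ≤ (∑ i ∈ s, f i ^ 2) / t ^ 2 := by
    rw [le_div_iff₀ (by positivity)]
    exact card_filter_lt_abs_mul_sq_le_sum_sq s f ht.le
  rw [sub_le_iff_le_add, mul_comm, ← div_div, ← add_div, one_le_div card_pos]
  linarith

lemma tendsto_card_filter_abs_le_div_card {α ι : Type*} {l : Filter α} {s : α → Finset ι}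
    {f : α → ι → ℝ} {t : α → ℝ} (hs : ∀ᶠ a in l, (s a).Nonempty) (ht : ∀ᶠ a in l, 0 < t a)
    (hf : (fun a ↦ ∑ i ∈ s a, f a i ^ 2) =o[l] fun a ↦ #(s a) * t a ^ 2) :
    Tendsto (fun a ↦ (#{i ∈ s a | |f a i| ≤ t a} : ℝ) / #(s a)) l (𝓝 1) := by
  have lower := hf.tendsto_div_nhds_zero.const_sub 1
  rw [sub_zero] at lower
  refine tendsto_of_tendsto_of_tendsto_of_le_of_le' lower tendsto_const_nhds ?_ ?_
  · filter_upwards [hs, ht] with a hsa hta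
    exact one_sub_sum_sq_div_le_card_filter_abs_le_div_card hsa (f a) hta
  · exact .of_forall fun a ↦
      div_le_one_of_le₀ (mod_cast card_filter_le _ _) (Nat.cast_nonneg _)

end Concentration

theorem hardy_ramanujan_general {ψ : ℕ → ℝ} (hψ : Tendsto ψ atTop atTop) :
    Tendsto
      (fun n : ℕ ↦
        (#{m ∈ Icc 1 n | |(#m.primeFactors : ℝ) - log (log n)| ≤ ψ n * √(log (log n))} : ℝ) / n)
      atTop (𝓝 1) := by
  have L_pos : ∀ᶠ n : ℕ in atTop, 0 < log (log n) :=
    tendsto_log_log_natCast_atTop.eventually_gt_atTop 0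
  have variance_isLittleO :
      (fun n : ℕ ↦ ∑ m ∈ Icc 1 n, ((#m.primeFactors : ℝ) - log (log n)) ^ 2)
        =o[atTop] fun n : ℕ ↦ #(Icc 1 n) * (ψ n * √(log (log n))) ^ 2 := by
    have one_isLittleO : (fun _ ↦ (1 : ℝ)) =o[atTop] fun n ↦ ψ n ^ 2 :=
      isLittleO_const_left.2 <| .inr <|
        tendsto_norm_atTop_atTop.comp ((tendsto_pow_atTop two_ne_zero).comp hψ)
    refine isBigO_sum_sq_card_primeFactors_sub_log_log.trans_isLittleO ?_
    refine ((isBigO_refl _ _).mul_isLittleO one_isLittleO).congr' (.of_forall fun _ ↦ mul_one _) ?_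
    filter_upwards [L_pos] with n hn
    rw [mul_pow, sq_sqrt hn.le, Nat.card_Icc, add_tsub_cancel_right]
    ring
  refine (tendsto_card_filter_abs_le_div_card ?_ ?_ variance_isLittleO).congr fun n ↦ by simp
  · filter_upwards [eventually_ge_atTop 1] with n hn
    exact nonempty_Icc.2 hn
  · filter_upwards [L_pos, hψ.eventually_gt_atTop 0] with n hn hψn
    positivity

/-- Hardy–Ramanujan theorem: for every ε > 0, the proportion of `m ≤ n` with
`|ω(m) - ln ln n| ≤ (ln ln n)^{1/2 + ε}` tends to 1. -/
theorem hardy_ramanujan (ε : ℝ) (hε : 0 < ε) :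
    Tendsto
      (fun n : ℕ =>
        (((Finset.Icc 1 n).filter (fun m =>
            |(m.primeFactors.card : ℝ) - Real.log (Real.log n)| ≤
              Real.log (Real.log n) ^ ((1 : ℝ) / 2 + ε))).card : ℝ) / n)
      atTop (nhds 1) := by
  have scale := (tendsto_rpow_atTop hε).comp tendsto_log_log_natCast_atTop
  refine (hardy_ramanujan_general scale).congr' ?_
  filter_upwards [tendsto_log_log_natCast_atTop.eventually_gt_atTop 0] with n hn
  simp only [Function.comp_apply, sqrt_eq_rpow, rpow_add hn, mul_comm]
end

section
/- Erdős–Kac theorem for the number of prime divisors counted with multiplicity: for every real x, (1/n)·#{m : 1 ≤ m ≤ n, Ω(m) - ln ln n ≤ x·√(ln ln n)} → Φ(x) as n → ∞, where Φ is the standard normal cumulative distribution function. -/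
open Filter MeasureTheory
open scoped Classical

/-- The standard normal cumulative distribution function. -/
noncomputable def stdNormalCDF (x : ℝ) : ℝ :=
  (Real.sqrt (2 * Real.pi))⁻¹ * ∫ t in Set.Iic x, Real.exp (-t ^ 2 / 2)

/-!
Write `L = log log n` and `z = exp (iθ) - 1`, and let `m` be uniform in `{1, …, n}`. By Mertens'
theorems, replacing `Ω m` by the number `ω_k m` of primes `p ≤ k = n ^ (1 / L)` dividing `m` costs
only `O(log L)` on average. Divisibility by primes up to `k` is close to independent: expanding
`(1 + z) ^ ω_k m = ∏_{p ≤ k} (1 + z 1_{p ∣ m})` and bounding the rounding errors by Rankin's trick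
gives `𝔼 (1 + z) ^ ω_k ≈ ∏_{p ≤ k} (1 + z / p) ≈ exp (z ∑_{p ≤ k} 1 / p) ≈ exp (z L)`. Thus `Ω` has
nearly the characteristic function of a Poisson variable of mean `L` at the frequencies
`θ = t / √L`, and the central limit theorem for Poisson variables and Lévy's continuity theorem
conclude.
-/

namespace ErdosKac

open Finset ProbabilityTheory Real
open Nat (primesLE mem_primesLE prime_of_mem_primesLE two_le_of_mem_primesLE le_of_mem_primesLE)
open scoped ArithmeticFunction.Omega BigOperators Topology

lemma primeFactors_factorial (n : ℕ) : n.factorial.primeFactors = primesLE n := by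
  ext p
  simp only [Nat.mem_primeFactors_of_ne_zero n.factorial_ne_zero, mem_primesLE]
  exact ⟨fun ⟨hp, h⟩ ↦ ⟨hp.dvd_factorial.1 h, hp⟩, fun ⟨h, hp⟩ ↦ ⟨hp, hp.dvd_factorial.2 h⟩⟩

lemma div_le_factorization_factorial {n p : ℕ} (hp : p.Prime) :
    n / p ≤ n.factorial.factorization p := by
  calc n / p ≤ (p * (n / p)).factorial.factorization p := by
        rw [Nat.factorization_factorial_mul hp]
        exact Nat.le_add_left _ _
    _ ≤ n.factorial.factorization p :=
        Nat.factorization_le_factorization_of_dvd_right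
          (Nat.factorial_dvd_factorial (Nat.mul_div_le n p))
          (Nat.factorial_ne_zero _) (Nat.factorial_ne_zero _)

lemma factorization_factorial_le {n p : ℕ} (hp : p.Prime) :
    (n.factorial.factorization p : ℝ) ≤ n / (p - 1) :=
  calc (n.factorial.factorization p : ℝ) ≤ (n / (p - 1) : ℕ) :=
        mod_cast Nat.factorization_factorial_le_div_pred hp n
    _ ≤ n / (p - 1 : ℕ) := Nat.cast_div_le
    _ = n / (p - 1) := by rw [Nat.cast_pred hp.pos]

lemma div_sub_one_le_cast_div (n d : ℕ) : (n : ℝ) / d - 1 ≤ (n / d : ℕ) := by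
  rw [← Nat.floor_div_eq_div (K := ℝ)]
  exact (Nat.sub_one_lt_floor _).le

lemma log_factorial_eq_sum (n : ℕ) :
    log n.factorial = ∑ p ∈ primesLE n, n.factorial.factorization p * log p := by
  rw [log_nat_eq_sum_factorization, Finsupp.sum, Nat.support_factorization, primeFactors_factorial]

lemma mul_log_sub_le_log_factorial (n : ℕ) : n * log n - n ≤ log n.factorial := by
  rcases n.eq_zero_or_pos with rfl | hn
  · simp
  have h := Real.pow_div_factorial_le_exp (n : ℝ) n.cast_nonneg n
  have hlog := log_le_log (by positivity) h
  rw [log_exp, log_div (by positivity) (by positivity), log_pow] at hlog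
  linarith

lemma log_factorial_le (n : ℕ) : log n.factorial ≤ n * log n := by
  rw [← log_pow]
  exact log_le_log (by positivity) (mod_cast n.factorial_le_pow)

lemma sum_primesLE_le_of_le_sub {f g : ℕ → ℝ} (hf : ∀ m, 0 ≤ f (m + 2)) (hg : ∀ m, 0 ≤ g m)
    (h : ∀ m, f (m + 2) ≤ g m - g (m + 1)) (n : ℕ) : ∑ p ∈ primesLE n, f p ≤ g 0 := by
  have hsub : primesLE n ⊆ Ico 2 (n + 2) := fun p hp ↦ by
    have := le_of_mem_primesLE hp
    have := two_le_of_mem_primesLE hp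
    simp only [mem_Ico]; omega
  have hnonneg : ∀ k ∈ Ico 2 (n + 2), k ∉ primesLE n → 0 ≤ f k := fun k hk _ ↦ by
    obtain ⟨m, rfl⟩ := Nat.exists_eq_add_of_le' (mem_Ico.1 hk).1
    exact hf m
  calc ∑ p ∈ primesLE n, f p ≤ ∑ k ∈ Ico 2 (n + 2), f k :=
        sum_le_sum_of_subset_of_nonneg hsub hnonneg
    _ = ∑ m ∈ range n, f (m + 2) := by simp [sum_Ico_eq_sum_range, add_comm]
    _ ≤ ∑ m ∈ range n, (g m - g (m + 1)) := sum_le_sum fun m _ ↦ h m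
    _ = g 0 - g n := sum_range_sub' g n
    _ ≤ g 0 := sub_le_self _ (hg n)

lemma sum_primesLE_inv_mul_sub_one_le (n : ℕ) :
    ∑ p ∈ primesLE n, ((p : ℝ) * (p - 1))⁻¹ ≤ 1 := by
  have h := sum_primesLE_le_of_le_sub (f := fun p ↦ ((p : ℝ) * (p - 1))⁻¹)
    (g := fun m ↦ ((m : ℝ) + 1)⁻¹) (fun m ↦ ?_) (fun m ↦ by positivity) (fun m ↦ ?_) n
  · simpa using h
  · push_cast
    have : (0 : ℝ) ≤ m + 2 - 1 := by linarith [m.cast_nonneg (α := ℝ)]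
    positivity
  · push_cast
    rw [show (m : ℝ) + 2 - 1 = m + 1 by ring, show (m : ℝ) + 1 + 1 = m + 2 by ring]
    apply le_of_eq
    field_simp
    ring

lemma log_div_sq_mul_sq_sub_one_le {a b : ℝ} (ha : 1 ≤ a) (hab : a ≤ b) (h : b ^ 2 = a ^ 2 + 1) :
    log (b ^ 2) / (b ^ 2 * a ^ 2) ≤ 4 / a - 4 / b := by
  have hb : 0 < b := by linarith
  have : 0 < a := by linarith
  have hlog : log (b ^ 2) ≤ 2 * a := by
    rw [log_pow]
    have := log_le_sub_one_of_pos hb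
    push_cast
    nlinarith
  have hdiff : 4 / a - 4 / b = 4 / (a * b * (a + b)) := by
    field_simp
    linarith
  calc log (b ^ 2) / (b ^ 2 * a ^ 2) ≤ 2 * a / (b ^ 2 * a ^ 2) := by gcongr
    _ = 4 / (a * b * (2 * b)) := by field_simp; norm_num
    _ ≤ 4 / (a * b * (a + b)) := by gcongr; linarith
    _ = 4 / a - 4 / b := hdiff.symm

lemma sum_primesLE_log_div_mul_sub_one_le (n : ℕ) :
    ∑ p ∈ primesLE n, log p / (p * (p - 1)) ≤ 4 := by
  have h := sum_primesLE_le_of_le_sub (f := fun p ↦ log p / (p * (p - 1)))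
    (g := fun m ↦ 4 / √(m + 1)) (fun m ↦ ?_) (fun m ↦ by positivity) (fun m ↦ ?_) n
  · simpa using h
  · have : (0 : ℝ) ≤ (m + 2 : ℕ) - 1 := by push_cast; linarith [m.cast_nonneg (α := ℝ)]
    positivity
  · have : (0 : ℝ) ≤ m := m.cast_nonneg
    have ha : √((m : ℝ) + 1) ^ 2 = m + 1 := sq_sqrt (by positivity)
    have hb : √((m : ℝ) + 2) ^ 2 = m + 2 := sq_sqrt (by positivity)
    have key := log_div_sq_mul_sq_sub_one_le (one_le_sqrt.2 (by linarith))
      (sqrt_le_sqrt (by linarith)) (by rw [ha, hb]; ring : √((m : ℝ) + 2) ^ 2 = √(m + 1) ^ 2 + 1)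
    rw [ha, hb] at key
    push_cast
    convert key using 4 <;> ring

lemma sum_primesLE_log_div_le {n : ℕ} (hn : 0 < n) :
    ∑ p ∈ primesLE n, log p / p ≤ log n + log 4 := by
  have hchebyshev : ∑ p ∈ primesLE n, log p ≤ log 4 * n := by
    rw [← Chebyshev.theta_eq_sum_primesLE_log]
    exact Chebyshev.theta_le_log4_mul_x n.cast_nonneg
  have hlegendre : ∑ p ∈ primesLE n, ((n : ℝ) / p - 1) * log p ≤ n * log n := by
    refine le_trans ?_ (log_factorial_le n)
    rw [log_factorial_eq_sum]
    gcongr with p hp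
    exact (div_sub_one_le_cast_div n p).trans
      (mod_cast div_le_factorization_factorial (prime_of_mem_primesLE hp))
  have hsum : ∑ p ∈ primesLE n, ((n : ℝ) / p - 1) * log p =
      n * ∑ p ∈ primesLE n, log p / p - ∑ p ∈ primesLE n, log p := by
    rw [mul_sum, ← sum_sub_distrib]
    exact sum_congr rfl fun p _ ↦ by ring
  refine le_of_mul_le_mul_left ?_ (Nat.cast_pos.2 hn : (0 : ℝ) < n)
  linarith

lemma log_sub_le_sum_primesLE_log_div {n : ℕ} (hn : 0 < n) :
    log n - 5 ≤ ∑ p ∈ primesLE n, log p / p := by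
  have hn' : (0 : ℝ) < n := Nat.cast_pos.2 hn
  have hlegendre : n * log n - n ≤ ∑ p ∈ primesLE n, n / ((p : ℝ) - 1) * log p := by
    refine (mul_log_sub_le_log_factorial n).trans ?_
    rw [log_factorial_eq_sum]
    gcongr with p hp
    exact factorization_factorial_le (prime_of_mem_primesLE hp)
  have hsum : ∑ p ∈ primesLE n, n / ((p : ℝ) - 1) * log p =
      n * (∑ p ∈ primesLE n, log p / p + ∑ p ∈ primesLE n, log p / (p * (p - 1))) := by
    rw [← sum_add_distrib, mul_sum]
    refine sum_congr rfl fun p hp ↦ ?_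
    have hp1 : (1 : ℝ) < p := mod_cast (prime_of_mem_primesLE hp).one_lt
    have : (p : ℝ) - 1 ≠ 0 := by linarith
    field_simp
    ring
  have htail := sum_primesLE_log_div_mul_sub_one_le n
  rw [hsum] at hlegendre
  have : log n - 1 ≤ ∑ p ∈ primesLE n, log p / p + ∑ p ∈ primesLE n, log p / (p * (p - 1)) := by
    refine le_of_mul_le_mul_left ?_ hn'
    linarith
  linarith

lemma abs_sum_primesLE_log_div_sub_log_le {n : ℕ} (hn : 0 < n) :
    |∑ p ∈ primesLE n, log p / p - log n| ≤ 5 := by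
  have := log_le_sub_one_of_pos (show (0 : ℝ) < 4 by norm_num)
  rw [abs_le]
  constructor <;> linarith [sum_primesLE_log_div_le hn, log_sub_le_sum_primesLE_log_div hn]

lemma abs_mul_inv_sub_inv_add_sub_log_sub_log_le {a b e C : ℝ} (ha : 0 < a) (hab : a < b)
    (hba : b ≤ a + 1) (he : |e| ≤ C) :
    |e * (a⁻¹ - b⁻¹) + (b - a) / b - (log b - log a)| ≤ (C + 1) * (a⁻¹ - b⁻¹) := by
  have hb : 0 < b := ha.trans hab
  have hinv : 0 < a⁻¹ - b⁻¹ := sub_pos.2 (inv_strictAnti₀ ha hab)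
  have hlog : log b - log a = log (b / a) := (log_div hb.ne' ha.ne').symm
  have hlower : (b - a) / b ≤ log b - log a := by
    rw [hlog]
    refine le_trans (le_of_eq ?_) (one_sub_inv_le_log_of_pos (by positivity))
    field_simp
  have hupper : log b - log a ≤ (b - a) / b + (a⁻¹ - b⁻¹) := by
    calc log b - log a ≤ b / a - 1 := hlog ▸ log_le_sub_one_of_pos (by positivity)
      _ = (b - a) / b + (b - a) * (a⁻¹ - b⁻¹) := by field_simp; ring
      _ ≤ (b - a) / b + (a⁻¹ - b⁻¹) := by
          gcongr
          exact mul_le_of_le_one_left hinv.le (by linarith)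
  have herr : |e * (a⁻¹ - b⁻¹)| ≤ C * (a⁻¹ - b⁻¹) := by
    rw [abs_mul, abs_of_pos hinv]
    gcongr
  rw [abs_le] at herr ⊢
  constructor <;> linarith

lemma log_add_one_sub_log_le {x : ℝ} (hx : 1 ≤ x) : log (x + 1) - log x ≤ 1 := by
  have hx0 : 0 < x := by linarith
  rw [← log_div (by positivity) (by positivity)]
  calc log ((x + 1) / x) ≤ (x + 1) / x - 1 := log_le_sub_one_of_pos (by positivity)
    _ = 1 / x := by field_simp; ring
    _ ≤ 1 := (div_le_one hx0).2 hx

section AbelSummation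

variable {a : ℕ → ℝ} {C : ℝ} (h : ∀ n ≥ 2, |∑ k ∈ Icc 2 n, a k - log n| ≤ C) {n : ℕ} (hn : 2 ≤ n)
include h hn

-- Subtracting the boundary term of Abel summation leaves a quantity whose increments telescope.
lemma abs_sum_div_log_sub_boundary_sub_log_log_le :
    |∑ k ∈ Icc 2 n, a k / log k - (∑ k ∈ Icc 2 n, a k - log n) / log n - log (log n)| ≤
      (1 - log (log 2)) + (C + 1) * ((log 2)⁻¹ - (log n)⁻¹) := by
  have hlog2 : 0 < log 2 := log_pos (by norm_num)
  induction n, hn using Nat.le_induction with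
  | base =>
    have hlog2' : log 2 ≤ 1 := by linarith [log_two_lt_d9]
    have hinit : a 2 / log 2 - (a 2 - log 2) / log 2 - log (log 2) = 1 - log (log 2) := by
      field_simp
      ring
    have : log (log 2) ≤ 0 := log_nonpos hlog2.le hlog2'
    simp only [Icc_self, sum_singleton, Nat.cast_ofNat, hinit, sub_self, mul_zero, add_zero]
    exact (abs_of_nonneg (by linarith)).le
  | succ n hn ih =>
    have hn' : (2 : ℝ) ≤ n := mod_cast hn
    have hpos : 0 < log n := log_pos (by linarith)
    have hlt : log n < log (n + 1) := log_lt_log (by linarith) (by linarith)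
    have hpos' := hpos.trans hlt
    have hstep := abs_mul_inv_sub_inv_add_sub_log_sub_log_le hpos hlt
      (sub_le_iff_le_add'.1 (log_add_one_sub_log_le (by linarith))) (h n hn)
    rw [sum_Icc_succ_top (by omega), sum_Icc_succ_top (by omega), Nat.cast_add_one]
    set S := ∑ k ∈ Icc 2 n, a k / log k
    set E := ∑ k ∈ Icc 2 n, a k
    have hrec : S + a (n + 1) / log (n + 1) - (E + a (n + 1) - log (n + 1)) / log (n + 1) -
          log (log (n + 1)) =
        (S - (E - log n) / log n - log (log n)) + ((E - log n) * ((log n)⁻¹ - (log (n + 1))⁻¹) +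
          (log (n + 1) - log n) / log (n + 1) - (log (log (n + 1)) - log (log n))) := by
      field_simp
      ring
    rw [hrec]
    refine (abs_add_le _ _).trans ((add_le_add ih hstep).trans (le_of_eq ?_))
    ring

lemma abs_sum_div_log_sub_log_log_le :
    |∑ k ∈ Icc 2 n, a k / log k - log (log n)| ≤ (C + 2) / log 2 := by
  have hlog2 : 0 < log 2 := log_pos (by norm_num)
  have hlog : log 2 ≤ log n := log_le_log (by norm_num) (mod_cast hn)
  have hboundary : |(∑ k ∈ Icc 2 n, a k - log n) / log n| ≤ C * (log n)⁻¹ := by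
    rw [abs_div, abs_of_pos (hlog2.trans_le hlog), div_eq_mul_inv]
    gcongr
    exact h n hn
  have hinv : 0 < (log n)⁻¹ := inv_pos.2 (hlog2.trans_le hlog)
  have hloglog : 1 - log (log 2) ≤ (log 2)⁻¹ := by
    linarith [one_sub_inv_le_log_of_pos hlog2]
  have htotal := (abs_add_le _ _).trans
    (add_le_add (abs_sum_div_log_sub_boundary_sub_log_log_le h hn) hboundary)
  rw [show ∀ s b l : ℝ, s - b - l + b = s - l by intros; ring] at htotal
  rw [div_eq_mul_inv]
  linarith

end AbelSummation

lemma abs_sum_primesLE_inv_sub_log_log_le {n : ℕ} (hn : 2 ≤ n) :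
    |∑ p ∈ primesLE n, (p : ℝ)⁻¹ - log (log n)| ≤ 7 / log 2 := by
  set a : ℕ → ℝ := fun k ↦ if k.Prime then log k / k else 0 with ha
  have hmertens : ∀ n ≥ 2, |∑ k ∈ Icc 2 n, a k - log n| ≤ 5 := fun n hn ↦ by
    rw [ha, ← sum_filter, ← Nat.primesLE_eq_filter_Icc_two]
    exact abs_sum_primesLE_log_div_sub_log_le (by omega)
  have hsum : ∑ p ∈ primesLE n, (p : ℝ)⁻¹ = ∑ k ∈ Icc 2 n, a k / log k := by
    rw [Nat.primesLE_eq_filter_Icc_two, sum_filter]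
    refine sum_congr rfl fun k hk ↦ ?_
    have : log k ≠ 0 := (log_pos (mod_cast (mem_Icc.1 hk).1)).ne'
    simp only [ha, ite_div, zero_div]
    congr 1
    field_simp
  rw [hsum]
  exact (abs_sum_div_log_sub_log_log_le hmertens hn).trans_eq (by norm_num)

lemma abs_sum_primesLE_floor_inv_sub_log_log_le {y : ℝ} (hy : 2 ≤ y) :
    |∑ p ∈ primesLE ⌊y⌋₊, (p : ℝ)⁻¹ - log (log y)| ≤ 11 := by
  have hfloor : 2 ≤ ⌊y⌋₊ := Nat.le_floor (mod_cast hy)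
  have hfloor' : (2 : ℝ) ≤ ⌊y⌋₊ := mod_cast hfloor
  have hlog : 0 < log ⌊y⌋₊ := log_pos (by linarith)
  have hlower : log (log ⌊y⌋₊) ≤ log (log y) :=
    log_le_log hlog (log_le_log (by linarith) (Nat.floor_le (by linarith)))
  have hupper : log (log y) ≤ log 2 + log (log ⌊y⌋₊) := by
    have hsq : y ≤ (⌊y⌋₊ : ℝ) ^ 2 := by nlinarith [Nat.lt_floor_add_one y]
    rw [← log_mul (by norm_num) hlog.ne']
    refine log_le_log (log_pos (by linarith)) ((log_le_log (by linarith) hsq).trans_eq ?_)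
    rw [log_pow, Nat.cast_ofNat]
  have hconst : 7 / log 2 + log 2 ≤ 11 := by
    have : 7 / log 2 ≤ 10.2 := by
      rw [div_le_iff₀ (log_pos (by norm_num))]
      linarith [log_two_gt_d9]
    linarith [log_two_lt_d9]
  have hmertens := abs_le.1 (abs_sum_primesLE_inv_sub_log_log_le hfloor)
  rw [abs_le]
  constructor <;> linarith [log_pos (show (1 : ℝ) < 2 by norm_num)]

lemma sum_Icc_cardFactors (n : ℕ) : ∑ m ∈ Icc 1 n, Ω m = Ω n.factorial := by
  induction n with
  | zero => simp
  | succ n ih =>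
    rw [sum_Icc_succ_top (by omega), ih, Nat.factorial_succ,
      ArithmeticFunction.cardFactors_mul n.succ_ne_zero n.factorial_ne_zero, add_comm]

lemma cardFactors_factorial_le (n : ℕ) :
    (Ω n.factorial : ℝ) ≤ n * (∑ p ∈ primesLE n, (p : ℝ)⁻¹ + 1) := by
  have hsum : (Ω n.factorial : ℝ) = ∑ p ∈ primesLE n, (n.factorial.factorization p : ℝ) := by
    rw [ArithmeticFunction.cardFactors_eq_sum_factorization, Finsupp.sum,
      Nat.support_factorization, primeFactors_factorial, Nat.cast_sum]
  calc (Ω n.factorial : ℝ) ≤ ∑ p ∈ primesLE n, (n : ℝ) / (p - 1) := by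
        rw [hsum]
        exact sum_le_sum fun p hp ↦ factorization_factorial_le (prime_of_mem_primesLE hp)
    _ = ∑ p ∈ primesLE n, n * ((p : ℝ)⁻¹ + ((p : ℝ) * (p - 1))⁻¹) := by
        refine sum_congr rfl fun p hp ↦ ?_
        have hp1 : (1 : ℝ) < p := mod_cast (prime_of_mem_primesLE hp).one_lt
        have : (p : ℝ) - 1 ≠ 0 := by linarith
        field_simp
        ring
    _ = n * (∑ p ∈ primesLE n, (p : ℝ)⁻¹ + ∑ p ∈ primesLE n, ((p : ℝ) * (p - 1))⁻¹) := by
        rw [← mul_sum, sum_add_distrib]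
    _ ≤ n * (∑ p ∈ primesLE n, (p : ℝ)⁻¹ + 1) := by
        gcongr
        exact sum_primesLE_inv_mul_sub_one_le n

lemma expect_cardFactors_le (n : ℕ) :
    𝔼 m ∈ Icc 1 n, (Ω m : ℝ) ≤ ∑ p ∈ primesLE n, (p : ℝ)⁻¹ + 1 := by
  rw [expect_eq_sum_div_card, Nat.card_Icc, Nat.add_sub_cancel, ← Nat.cast_sum,
    sum_Icc_cardFactors]
  exact div_le_of_le_mul₀ n.cast_nonneg (by positivity)
    ((cardFactors_factorial_le n).trans_eq (mul_comm _ _))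

lemma expect_ite_dvd (𝕜 : Type*) [Semifield 𝕜] [CharZero 𝕜] (n d : ℕ) :
    𝔼 m ∈ Icc 1 n, (if d ∣ m then 1 else 0 : 𝕜) = (n / d : ℕ) / n := by
  rw [expect_eq_sum_div_card, sum_boole, Nat.card_Icc, Nat.add_sub_cancel,
    ← Nat.Ioc_filter_dvd_card_eq_div]
  rfl

/-- The number of primes `p ≤ k` dividing `m`, i.e. the truncation at `k` of the count `ω` of
distinct prime divisors. -/
def omegaLE (k m : ℕ) : ℕ := #{p ∈ primesLE k | p ∣ m}

lemma omegaLE_le_cardFactors {k m : ℕ} (hm : m ≠ 0) : omegaLE k m ≤ Ω m := by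
  rw [ArithmeticFunction.cardFactors_apply]
  refine (card_le_card fun p hp ↦ ?_).trans (List.toFinset_card_le m.primeFactorsList)
  rw [mem_filter] at hp
  exact List.mem_toFinset.2 ((Nat.mem_primeFactorsList hm).2 ⟨prime_of_mem_primesLE hp.1, hp.2⟩)

lemma prod_one_add_ite_dvd (k m : ℕ) (z : ℂ) :
    ∏ p ∈ primesLE k, (1 + if p ∣ m then z else 0) = (1 + z) ^ omegaLE k m := by
  rw [omegaLE, ← prod_const, prod_filter]
  simp only [add_ite, add_zero]

lemma sum_inv_sub_one_le_expect_omegaLE {k n : ℕ} (hk : k ≤ n) :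
    ∑ p ∈ primesLE k, (p : ℝ)⁻¹ - 1 ≤ 𝔼 m ∈ Icc 1 n, (omegaLE k m : ℝ) := by
  rcases n.eq_zero_or_pos with rfl | hn
  · simp [Nat.le_zero.1 hk]
  have hn' : (0 : ℝ) < n := Nat.cast_pos.2 hn
  have hcard : (#(primesLE k) : ℝ) ≤ n := by
    rw [Nat.primesLE_eq_filter_Icc_two]
    refine mod_cast (card_filter_le _ _).trans ?_
    rw [Nat.card_Icc]
    omega
  have hexpect : 𝔼 m ∈ Icc 1 n, (omegaLE k m : ℝ) = ∑ p ∈ primesLE k, ((n / p : ℕ) : ℝ) / n := by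
    simp only [omegaLE, ← sum_boole, expect_sum_comm, expect_ite_dvd]
  calc ∑ p ∈ primesLE k, (p : ℝ)⁻¹ - 1 ≤ ∑ p ∈ primesLE k, (p : ℝ)⁻¹ - #(primesLE k) / n := by
        gcongr
        exact (div_le_one hn').2 hcard
    _ = ∑ p ∈ primesLE k, ((n : ℝ) / p - 1) / n := by
        rw [div_eq_mul_inv, ← nsmul_eq_mul, ← sum_const, ← sum_sub_distrib]
        refine sum_congr rfl fun p _ ↦ ?_
        field_simp
    _ ≤ ∑ p ∈ primesLE k, ((n / p : ℕ) : ℝ) / n := by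
        gcongr with p
        exact div_sub_one_le_cast_div n p
    _ = 𝔼 m ∈ Icc 1 n, (omegaLE k m : ℝ) := hexpect.symm

lemma expect_cardFactors_sub_omegaLE_le {k n : ℕ} (hk : k ≤ n) :
    𝔼 m ∈ Icc 1 n, ((Ω m : ℝ) - omegaLE k m) ≤
      ∑ p ∈ primesLE n, (p : ℝ)⁻¹ - ∑ p ∈ primesLE k, (p : ℝ)⁻¹ + 2 := by
  rw [expect_sub_distrib]
  linarith [expect_cardFactors_le n, sum_inv_sub_one_le_expect_omegaLE hk]

lemma min_le_rpow_mul_rpow {a b δ : ℝ} (ha : 0 < a) (hb : 0 < b) (hδ₀ : 0 ≤ δ) (hδ₁ : δ ≤ 1) :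
    min a b ≤ a ^ δ * b ^ (1 - δ) := by
  have hmin : 0 < min a b := lt_min ha hb
  calc min a b = min a b ^ δ * min a b ^ (1 - δ) := by
        rw [← rpow_add hmin, add_sub_cancel, rpow_one]
    _ ≤ a ^ δ * b ^ (1 - δ) := by
        have : 0 ≤ 1 - δ := sub_nonneg.2 hδ₁
        gcongr
        exacts [min_le_left a b, min_le_right a b]

-- Rankin's trick: the error is at most both `1 / n` and `1 / d`, and we interpolate.
lemma abs_cast_div_div_sub_inv_le {n d : ℕ} (hn : 0 < n) (hd : 0 < d) {δ : ℝ} (hδ₀ : 0 ≤ δ)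
    (hδ₁ : δ ≤ 1) : |((n / d : ℕ) : ℝ) / n - (d : ℝ)⁻¹| ≤ (n : ℝ) ^ (-δ) * (d : ℝ) ^ (δ - 1) := by
  have hn' : (0 : ℝ) < n := Nat.cast_pos.2 hn
  have hd' : (0 : ℝ) < d := Nat.cast_pos.2 hd
  have hdiff : (d : ℝ)⁻¹ - ((n / d : ℕ) : ℝ) / n = (n / d - (n / d : ℕ)) / n := by field_simp
  have hnonneg : 0 ≤ (d : ℝ)⁻¹ - ((n / d : ℕ) : ℝ) / n := by
    rw [hdiff]
    exact div_nonneg (sub_nonneg.2 Nat.cast_div_le) hn'.le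
  have hle_inv_n : (d : ℝ)⁻¹ - ((n / d : ℕ) : ℝ) / n ≤ (n : ℝ)⁻¹ := by
    rw [hdiff, div_eq_mul_inv]
    exact mul_le_of_le_one_left (by positivity) (by linarith [div_sub_one_le_cast_div n d])
  have hle_inv_d : (d : ℝ)⁻¹ - ((n / d : ℕ) : ℝ) / n ≤ (d : ℝ)⁻¹ := sub_le_self _ (by positivity)
  rw [abs_sub_comm, abs_of_nonneg hnonneg]
  refine (le_min hle_inv_n hle_inv_d).trans
    ((min_le_rpow_mul_rpow (by positivity) (by positivity) hδ₀ hδ₁).trans_eq ?_)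
  rw [inv_rpow hn'.le, inv_rpow hd'.le, ← rpow_neg hn'.le, ← rpow_neg hd'.le, neg_sub]

section Sieve

variable {Q : Finset ℕ} (hQ : ∀ p ∈ Q, p.Prime) (z : ℕ → ℂ)
include hQ

lemma prod_one_add_ite_dvd_eq_sum (m : ℕ) :
    ∏ p ∈ Q, (1 + if p ∣ m then z p else 0) =
      ∑ s ∈ Q.powerset, (∏ p ∈ s, z p) * if ∏ p ∈ s, p ∣ m then 1 else 0 := by
  rw [prod_one_add]
  refine sum_congr rfl fun s hs ↦ ?_
  have hdvd : ∏ p ∈ s, p ∣ m ↔ ∀ p ∈ s, p ∣ m :=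
    ⟨fun h p hp ↦ (dvd_prod_of_mem _ hp).trans h, fun h ↦
      prod_primes_dvd m (fun p hp ↦ (hQ p (mem_powerset.1 hs hp)).prime) h⟩
  simp only [hdvd, prod_ite_zero, mul_ite, mul_one, mul_zero]

lemma expect_prod_one_add_ite_dvd (n : ℕ) :
    𝔼 m ∈ Icc 1 n, ∏ p ∈ Q, (1 + if p ∣ m then z p else 0) =
      ∑ s ∈ Q.powerset, (∏ p ∈ s, z p) * (((n / ∏ p ∈ s, p : ℕ) : ℂ) / n) := by
  simp only [prod_one_add_ite_dvd_eq_sum hQ, expect_sum_comm, ← mul_expect, expect_ite_dvd]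

lemma norm_expect_prod_sub_prod_le {n : ℕ} (hn : 0 < n) {δ : ℝ} (hδ₀ : 0 ≤ δ) (hδ₁ : δ ≤ 1) :
    ‖𝔼 m ∈ Icc 1 n, ∏ p ∈ Q, (1 + if p ∣ m then z p else 0) - ∏ p ∈ Q, (1 + z p / p)‖ ≤
      (n : ℝ) ^ (-δ) * ∏ p ∈ Q, (1 + ‖z p‖ * (p : ℝ) ^ (δ - 1)) := by
  have hterm : ∀ s ∈ Q.powerset,
      ‖(∏ p ∈ s, z p) * (((n / ∏ p ∈ s, p : ℕ) : ℂ) / n) - ∏ p ∈ s, z p / p‖ ≤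
        (n : ℝ) ^ (-δ) * ∏ p ∈ s, ‖z p‖ * (p : ℝ) ^ (δ - 1) := fun s hs ↦ by
    set d := ∏ p ∈ s, p with hd
    have hd0 : 0 < d := prod_pos fun p hp ↦ (hQ p (mem_powerset.1 hs hp)).pos
    have hfactor : (∏ p ∈ s, z p) * (((n / d : ℕ) : ℂ) / n) - ∏ p ∈ s, z p / p =
        (∏ p ∈ s, z p) * (((n / d : ℕ) : ℝ) / n - (d : ℝ)⁻¹ : ℝ) := by
      rw [prod_div_distrib, hd]
      push_cast
      ring
    rw [hfactor, norm_mul, norm_prod, Complex.norm_real, norm_eq_abs, prod_mul_distrib,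
      finsetProd_rpow _ _ (fun p _ ↦ p.cast_nonneg), ← Nat.cast_prod, mul_left_comm]
    gcongr
    exact abs_cast_div_div_sub_inv_le hn hd0 hδ₀ hδ₁
  rw [expect_prod_one_add_ite_dvd hQ, prod_one_add, prod_one_add, ← sum_sub_distrib, mul_sum]
  exact (norm_sum_le _ _).trans (sum_le_sum hterm)

end Sieve

lemma norm_exp_sub_exp_le_of_re_nonpos {u v : ℂ} (hu : u.re ≤ 0) (hv : v.re ≤ 0) :
    ‖Complex.exp u - Complex.exp v‖ ≤ ‖u - v‖ := by
  have hderiv : ∀ w ∈ {w : ℂ | w.re ≤ 0}, ‖deriv Complex.exp w‖ ≤ 1 := fun w hw ↦ by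
    rw [Complex.deriv_exp, Complex.norm_exp]
    exact exp_le_one_iff.2 hw
  simpa using (convex_halfSpace_re_le 0).norm_image_sub_le_of_norm_deriv_le
    (fun w _ ↦ Complex.differentiableAt_exp) hderiv hv hu

lemma norm_prod_sub_prod_le {ι R : Type*} [NormedCommRing R] [NormOneClass R] (s : Finset ι)
    {f g : ι → R} (hf : ∀ i ∈ s, ‖f i‖ ≤ 1) (hg : ∀ i ∈ s, ‖g i‖ ≤ 1) :
    ‖∏ i ∈ s, f i - ∏ i ∈ s, g i‖ ≤ ∑ i ∈ s, ‖f i - g i‖ := by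
  induction s using Finset.induction_on with
  | empty => simp
  | insert a s ha ih =>
    simp only [forall_mem_insert] at hf hg
    have hprod : ‖∏ i ∈ s, f i‖ ≤ 1 :=
      (norm_prod_le s f).trans (prod_le_one (fun _ _ ↦ norm_nonneg _) hf.2)
    rw [prod_insert ha, prod_insert ha, sum_insert ha]
    calc ‖f a * ∏ i ∈ s, f i - g a * ∏ i ∈ s, g i‖
        = ‖(f a - g a) * ∏ i ∈ s, f i + g a * (∏ i ∈ s, f i - ∏ i ∈ s, g i)‖ := by ring_nf
      _ ≤ ‖f a - g a‖ * ‖∏ i ∈ s, f i‖ + ‖g a‖ * ‖∏ i ∈ s, f i - ∏ i ∈ s, g i‖ :=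
          (norm_add_le _ _).trans (add_le_add (norm_mul_le _ _) (norm_mul_le _ _))
      _ ≤ ‖f a - g a‖ * 1 + 1 * ∑ i ∈ s, ‖f i - g i‖ := by
          gcongr
          exacts [hg.1, ih hf.2 hg.2]
      _ = ‖f a - g a‖ + ∑ i ∈ s, ‖f i - g i‖ := by ring

section UnitDisc

variable {z : ℂ} (hz : ‖1 + z‖ ≤ 1)
include hz

lemma re_nonpos_of_norm_one_add_le : z.re ≤ 0 := by
  have := (Complex.re_le_norm (1 + z)).trans hz
  rwa [Complex.add_re, Complex.one_re, add_le_iff_nonpos_right] at this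

lemma norm_le_two_of_norm_one_add_le : ‖z‖ ≤ 2 := by
  have := norm_sub_le (1 + z) 1
  rw [add_sub_cancel_left, norm_one] at this
  linarith

lemma norm_one_add_mul_le {t : ℝ} (ht₀ : 0 ≤ t) (ht₁ : t ≤ 1) : ‖1 + z * t‖ ≤ 1 := by
  calc ‖1 + z * t‖ = ‖((1 - t : ℝ) : ℂ) + (1 + z) * t‖ := by push_cast; ring_nf
    _ ≤ (1 - t) + ‖1 + z‖ * t := by
        refine (norm_add_le _ _).trans_eq ?_
        rw [norm_mul, Complex.norm_of_nonneg ht₀, Complex.norm_of_nonneg (sub_nonneg.2 ht₁)]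
    _ ≤ (1 - t) + 1 * t := by gcongr
    _ = 1 := by ring

lemma norm_prod_one_add_div_sub_exp_le (n : ℕ) :
    ‖∏ p ∈ primesLE n, (1 + z / p) -
      Complex.exp (z * ((∑ p ∈ primesLE n, (p : ℝ)⁻¹ : ℝ) : ℂ))‖ ≤ ‖z‖ ^ 2 := by
  have hexp : Complex.exp (z * ((∑ p ∈ primesLE n, (p : ℝ)⁻¹ : ℝ) : ℂ)) =
      ∏ p ∈ primesLE n, Complex.exp (z / p) := by
    rw [← Complex.exp_sum]
    push_cast
    simp only [mul_sum, div_eq_mul_inv]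
  have hterm : ∀ p ∈ primesLE n,
      ‖1 + z / p - Complex.exp (z / p)‖ ≤ ‖z‖ ^ 2 * ((p : ℝ) * (p - 1))⁻¹ := fun p hp ↦ by
    have hp2 : (2 : ℝ) ≤ p := mod_cast two_le_of_mem_primesLE hp
    have hnorm : ‖z / p‖ = ‖z‖ / p := by rw [norm_div, Complex.norm_natCast]
    have hsmall : ‖z / p‖ ≤ 1 := by
      rw [hnorm, div_le_one (by linarith)]
      exact (norm_le_two_of_norm_one_add_le hz).trans hp2
    calc ‖1 + z / p - Complex.exp (z / p)‖ = ‖Complex.exp (z / p) - 1 - z / p‖ := by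
          rw [norm_sub_rev, sub_sub]
      _ ≤ ‖z / p‖ ^ 2 := Complex.norm_exp_sub_one_sub_id_le hsmall
      _ = ‖z‖ ^ 2 * ((p : ℝ) * p)⁻¹ := by rw [hnorm, div_pow, div_eq_mul_inv, sq (p : ℝ)]
      _ ≤ ‖z‖ ^ 2 * ((p : ℝ) * (p - 1))⁻¹ := by
          have : (0 : ℝ) < p - 1 := by linarith
          gcongr
          linarith
  rw [hexp]
  refine (norm_prod_sub_prod_le _ (fun p hp ↦ ?_) (fun p _ ↦ ?_)).trans
    ((sum_le_sum hterm).trans ?_)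
  · have hp1 : (1 : ℝ) ≤ p := mod_cast (prime_of_mem_primesLE hp).one_le
    simpa [div_eq_mul_inv] using norm_one_add_mul_le hz (inv_nonneg.2 p.cast_nonneg)
      (inv_le_one_of_one_le₀ hp1)
  · rw [Complex.norm_exp, exp_le_one_iff, Complex.div_natCast_re]
    exact div_nonpos_of_nonpos_of_nonneg (re_nonpos_of_norm_one_add_le hz) p.cast_nonneg
  · rw [← mul_sum]
    exact mul_le_of_le_one_right (by positivity) (sum_primesLE_inv_mul_sub_one_le n)

end UnitDisc

/-- The level `⌊n ^ (1 / log log n)⌋` at which prime divisors are truncated: all but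
`O(log log log n)` of the prime divisors of a typical `m ≤ n` lie below it, and it is small enough
for the sieve. -/
noncomputable def primeCutoff (n : ℕ) : ℕ := ⌊(n : ℝ) ^ (log (log n))⁻¹⌋₊

section Cutoff

variable {n : ℕ} (hL : 1 ≤ log (log n))
include hL

lemma log_pos_of_one_le_log_log : 0 < log n := by
  refine (log_natCast_nonneg n).lt_of_ne fun h ↦ ?_
  rw [← h, log_zero] at hL
  linarith

lemma one_lt_of_one_le_log_log : (1 : ℝ) < n :=
  (log_pos_iff n.cast_nonneg).1 (log_pos_of_one_le_log_log hL)

lemma log_log_le_log : log (log n) ≤ log n := log_le_self (log_pos_of_one_le_log_log hL).le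

lemma log_rpow_inv_log_log : log ((n : ℝ) ^ (log (log n))⁻¹) = log n / log (log n) := by
  rw [log_rpow (by linarith [one_lt_of_one_le_log_log hL]), inv_mul_eq_div]

lemma two_le_rpow_inv_log_log : 2 ≤ (n : ℝ) ^ (log (log n))⁻¹ := by
  have hn := one_lt_of_one_le_log_log hL
  calc (2 : ℝ) ≤ exp 1 := by linarith [add_one_le_exp 1]
    _ ≤ (n : ℝ) ^ (log (log n))⁻¹ := by
      rw [← le_log_iff_exp_le (by positivity), log_rpow_inv_log_log hL]
      exact (one_le_div (by linarith)).2 (log_log_le_log hL)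

lemma primeCutoff_le : primeCutoff n ≤ n :=
  Nat.floor_le_of_le ((rpow_le_rpow_of_exponent_le (one_lt_of_one_le_log_log hL).le
    (inv_le_one_of_one_le₀ hL)).trans_eq (rpow_one _))

lemma abs_sum_primesLE_primeCutoff_inv_sub_le :
    |∑ p ∈ primesLE (primeCutoff n), (p : ℝ)⁻¹ - (log (log n) - log (log (log n)))| ≤ 11 := by
  have h := abs_sum_primesLE_floor_inv_sub_log_log_le (two_le_rpow_inv_log_log hL)
  rwa [log_rpow_inv_log_log hL, log_div (log_pos_of_one_le_log_log hL).ne' (by linarith)] at h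

lemma sum_primesLE_primeCutoff_inv_le :
    ∑ p ∈ primesLE (primeCutoff n), (p : ℝ)⁻¹ ≤ log (log n) + 11 := by
  linarith [(abs_le.1 (abs_sum_primesLE_primeCutoff_inv_sub_le hL)).2, log_nonneg hL]

lemma expect_cardFactors_sub_omegaLE_primeCutoff_le :
    𝔼 m ∈ Icc 1 n, ((Ω m : ℝ) - omegaLE (primeCutoff n) m) ≤ log (log (log n)) + 24 := by
  have hn : (2 : ℝ) ≤ n := mod_cast one_lt_of_one_le_log_log hL
  have hall := (abs_le.1 (abs_sum_primesLE_floor_inv_sub_log_log_le hn)).2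
  have hcutoff := (abs_le.1 (abs_sum_primesLE_primeCutoff_inv_sub_le hL)).1
  rw [Nat.floor_natCast] at hall
  linarith [expect_cardFactors_sub_omegaLE_le (primeCutoff_le hL)]

lemma rpow_sub_one_le_of_mem_primesLE_primeCutoff {p : ℕ} (hp : p ∈ primesLE (primeCutoff n)) :
    (p : ℝ) ^ (log (log n) / log n - 1) ≤ exp 1 * (p : ℝ)⁻¹ := by
  have hlog := log_pos_of_one_le_log_log hL
  have hn := one_lt_of_one_le_log_log hL
  have hp0 : (0 : ℝ) < p := mod_cast (prime_of_mem_primesLE hp).pos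
  have hle : (p : ℝ) ≤ (n : ℝ) ^ (log (log n))⁻¹ :=
    (Nat.le_floor_iff (by positivity)).1 (le_of_mem_primesLE hp)
  rw [rpow_sub_one hp0.ne', div_eq_mul_inv _ (p : ℝ)]
  gcongr
  calc (p : ℝ) ^ (log (log n) / log n) ≤ ((n : ℝ) ^ (log (log n))⁻¹) ^ (log (log n) / log n) := by
        gcongr
    _ = exp 1 := by
      rw [← rpow_mul (by positivity), rpow_def_of_pos (by linarith)]
      field_simp

lemma prod_one_add_mul_rpow_primeCutoff_le {c : ℝ} (hc : 0 ≤ c) :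
    ∏ p ∈ primesLE (primeCutoff n), (1 + c * (p : ℝ) ^ (log (log n) / log n - 1)) ≤
      exp (exp 1 * c * (log (log n) + 11)) := by
  calc ∏ p ∈ primesLE (primeCutoff n), (1 + c * (p : ℝ) ^ (log (log n) / log n - 1))
      ≤ ∏ p ∈ primesLE (primeCutoff n), exp (exp 1 * c * (p : ℝ)⁻¹) := by
        refine prod_le_prod (fun p _ ↦ by positivity) fun p hp ↦ ?_
        calc 1 + c * (p : ℝ) ^ (log (log n) / log n - 1) ≤ 1 + c * (exp 1 * (p : ℝ)⁻¹) := by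
              gcongr
              exact rpow_sub_one_le_of_mem_primesLE_primeCutoff hL hp
          _ = exp 1 * c * (p : ℝ)⁻¹ + 1 := by ring
          _ ≤ exp (exp 1 * c * (p : ℝ)⁻¹) := add_one_le_exp _
    _ = exp (exp 1 * c * ∑ p ∈ primesLE (primeCutoff n), (p : ℝ)⁻¹) := by
        rw [← exp_sum, mul_sum]
    _ ≤ exp (exp 1 * c * (log (log n) + 11)) := by
        gcongr
        exact sum_primesLE_primeCutoff_inv_le hL

-- With `δ = log log n / log n` one has `n ^ (-δ) = 1 / log n`, while `p ^ δ ≤ e` below the cutoff.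
lemma norm_expect_pow_omegaLE_primeCutoff_sub_prod_le (z : ℂ) :
    ‖𝔼 m ∈ Icc 1 n, (1 + z) ^ omegaLE (primeCutoff n) m -
        ∏ p ∈ primesLE (primeCutoff n), (1 + z / p)‖ ≤
      exp (-log (log n) + exp 1 * ‖z‖ * (log (log n) + 11)) := by
  have hlog := log_pos_of_one_le_log_log hL
  have hn := zero_lt_one.trans (one_lt_of_one_le_log_log hL)
  have hn_rpow : (n : ℝ) ^ (-(log (log n) / log n)) = exp (-log (log n)) := by
    rw [rpow_def_of_pos hn]
    field_simp
  have hsieve := norm_expect_prod_sub_prod_le (fun p hp ↦ prime_of_mem_primesLE hp) (fun _ ↦ z)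
    (Q := primesLE (primeCutoff n)) (Nat.cast_pos.1 hn) (δ := log (log n) / log n) (by positivity)
    ((div_le_one hlog).2 (log_log_le_log hL))
  simp only [prod_one_add_ite_dvd, hn_rpow] at hsieve
  rw [exp_add]
  refine hsieve.trans ?_
  gcongr
  exact prod_one_add_mul_rpow_primeCutoff_le hL (norm_nonneg z)

lemma norm_expect_exp_cardFactors_sub_omegaLE_le (θ : ℝ) :
    ‖𝔼 m ∈ Icc 1 n, Complex.exp (θ * Ω m * Complex.I) -
        𝔼 m ∈ Icc 1 n, Complex.exp (θ * omegaLE (primeCutoff n) m * Complex.I)‖ ≤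
      |θ| * (log (log (log n)) + 24) := by
  rw [← expect_sub_distrib]
  refine (RCLike.norm_expect_le (K := ℂ)).trans ?_
  calc 𝔼 m ∈ Icc 1 n, ‖Complex.exp (θ * Ω m * Complex.I) -
          Complex.exp (θ * omegaLE (primeCutoff n) m * Complex.I)‖
      ≤ 𝔼 m ∈ Icc 1 n, |θ| * ((Ω m : ℝ) - omegaLE (primeCutoff n) m) := by
        refine expect_le_expect fun m hm ↦ ?_
        have hle : (omegaLE (primeCutoff n) m : ℝ) ≤ Ω m :=
          mod_cast omegaLE_le_cardFactors (Nat.one_le_iff_ne_zero.1 (mem_Icc.1 hm).1)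
        refine (norm_exp_sub_exp_le_of_re_nonpos (by simp) (by simp)).trans_eq ?_
        rw [← sub_mul, ← mul_sub, norm_mul, norm_mul, Complex.norm_I, mul_one, Complex.norm_real,
          norm_eq_abs, ← abs_of_nonneg (sub_nonneg.2 hle), ← norm_eq_abs (_ - _),
          ← Complex.norm_real]
        push_cast
        rfl
    _ = |θ| * 𝔼 m ∈ Icc 1 n, ((Ω m : ℝ) - omegaLE (primeCutoff n) m) := (mul_expect _ _ _).symm
    _ ≤ |θ| * (log (log (log n)) + 24) := by
        gcongr
        exact expect_cardFactors_sub_omegaLE_primeCutoff_le hL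

lemma norm_exp_mul_sum_primeCutoff_sub_exp_mul_log_log_le {z : ℂ} (hz : z.re ≤ 0) :
    ‖Complex.exp (z * ((∑ p ∈ primesLE (primeCutoff n), (p : ℝ)⁻¹ : ℝ) : ℂ)) -
        Complex.exp (z * (log (log n) : ℝ))‖ ≤ ‖z‖ * (log (log (log n)) + 11) := by
  have hA : 0 ≤ ∑ p ∈ primesLE (primeCutoff n), (p : ℝ)⁻¹ := by positivity
  refine (norm_exp_sub_exp_le_of_re_nonpos ?_ ?_).trans ?_
  · rw [Complex.re_mul_ofReal]
    exact mul_nonpos_of_nonpos_of_nonneg hz hA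
  · rw [Complex.re_mul_ofReal]
    exact mul_nonpos_of_nonpos_of_nonneg hz (by linarith)
  · rw [← mul_sub, norm_mul, ← Complex.ofReal_sub, Complex.norm_real, norm_eq_abs]
    gcongr
    have := abs_le.1 (abs_sum_primesLE_primeCutoff_inv_sub_le hL)
    rw [abs_le]
    constructor <;> linarith [log_nonneg hL]

-- `exp (z * log log n)` with `z = exp (θ * I) - 1` is the characteristic function at `θ` of a
-- Poisson variable of mean `log log n`.
lemma norm_expect_exp_cardFactors_sub_exp_le (θ : ℝ) :
    ‖𝔼 m ∈ Icc 1 n, Complex.exp (θ * Ω m * Complex.I) -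
        Complex.exp ((Complex.exp (θ * Complex.I) - 1) * (log (log n) : ℝ))‖ ≤
      |θ| * (2 * log (log (log n)) + 35) +
        exp (-log (log n) + exp 1 * |θ| * (log (log n) + 11)) + θ ^ 2 := by
  set z := Complex.exp (θ * Complex.I) - 1 with hz
  set k := primeCutoff n with hk
  have hz1 : ‖1 + z‖ ≤ 1 := by rw [hz, add_sub_cancel, Complex.norm_exp_ofReal_mul_I]
  have hzθ : ‖z‖ ≤ |θ| := by
    rw [hz, mul_comm]
    exact norm_exp_I_mul_ofReal_sub_one_le
  have hpow : ∀ m, Complex.exp (θ * omegaLE k m * Complex.I) = (1 + z) ^ omegaLE k m := fun m ↦ by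
    rw [hz, add_sub_cancel, ← Complex.exp_nat_mul]
    ring_nf
  have htruncate := norm_expect_exp_cardFactors_sub_omegaLE_le hL θ
  simp only [← hk, hpow] at htruncate
  have hsieve := norm_expect_pow_omegaLE_primeCutoff_sub_prod_le hL z
  have hpoisson := norm_prod_one_add_div_sub_exp_le hz1 k
  have hmertens := norm_exp_mul_sum_primeCutoff_sub_exp_mul_log_log_le hL
    (re_nonpos_of_norm_one_add_le hz1)
  have hLL := log_nonneg hL
  calc _ ≤ |θ| * (log (log (log n)) + 24) +
        (exp (-log (log n) + exp 1 * ‖z‖ * (log (log n) + 11)) + (‖z‖ ^ 2 +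
          ‖z‖ * (log (log (log n)) + 11))) :=
      (norm_sub_le_norm_sub_add_norm_sub ..).trans (add_le_add htruncate
        ((norm_sub_le_norm_sub_add_norm_sub ..).trans (add_le_add hsieve
          ((norm_sub_le_norm_sub_add_norm_sub ..).trans (add_le_add hpoisson hmertens)))))
    _ ≤ |θ| * (log (log (log n)) + 24) +
        (exp (-log (log n) + exp 1 * |θ| * (log (log n) + 11)) + (|θ| ^ 2 +
          |θ| * (log (log (log n)) + 11))) := by gcongr
    _ = _ := by rw [sq_abs]; ring

end Cutoff

lemma tendsto_log_log_natCast : Tendsto (fun n : ℕ ↦ log (log n)) atTop atTop :=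
  tendsto_log_atTop.comp (tendsto_log_atTop.comp tendsto_natCast_atTop_atTop)

lemma tendsto_inv_sqrt : Tendsto (fun L ↦ (√L)⁻¹) atTop (𝓝 0) :=
  tendsto_inv_atTop_zero.comp tendsto_sqrt_atTop

lemma tendsto_log_mul_inv_sqrt : Tendsto (fun L ↦ log L * (√L)⁻¹) atTop (𝓝 0) := by
  refine (isLittleO_log_rpow_atTop (r := 1 / 2) (by norm_num)).tendsto_div_nhds_zero.congr
    fun L ↦ ?_
  rw [sqrt_eq_rpow, div_eq_mul_inv]

lemma tendsto_abs_div_sqrt_mul_log_add (t c : ℝ) :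
    Tendsto (fun L ↦ |t / √L| * (2 * log L + c)) atTop (𝓝 0) := by
  have h := (tendsto_log_mul_inv_sqrt.const_mul (2 * |t|)).add
    (tendsto_inv_sqrt.const_mul (c * |t|))
  simp only [mul_zero, add_zero] at h
  refine h.congr fun L ↦ ?_
  rw [abs_div, abs_of_nonneg (sqrt_nonneg L)]
  ring

lemma tendsto_exp_neg_add_mul_abs_div_sqrt (t c a : ℝ) :
    Tendsto (fun L ↦ exp (-L + a * |t / √L| * (L + c))) atTop (𝓝 0) := by
  refine tendsto_exp_atBot.comp ?_
  have hlinear : Tendsto (fun L ↦ (-√L + a * |t|) * √L) atTop atBot :=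
    ((tendsto_neg_atTop_atBot.comp tendsto_sqrt_atTop).atBot_add
      tendsto_const_nhds).atBot_mul_atTop₀ tendsto_sqrt_atTop
  refine (hlinear.atBot_add (tendsto_inv_sqrt.const_mul (a * |t| * c))).congr' ?_
  filter_upwards [eventually_gt_atTop 0] with L hL
  have hsqrt : √L * √L = L := mul_self_sqrt hL.le
  have : 0 < √L := sqrt_pos.2 hL
  rw [abs_div, abs_of_pos this]
  field_simp
  linear_combination (-√L + |t| * a) * hsqrt

lemma norm_exp_sub_one_sub_id_sub_sq_div_two_le (w : ℂ) :
    ‖Complex.exp w - 1 - w - w ^ 2 / 2‖ ≤ ‖w‖ ^ 3 * exp ‖w‖ := by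
  have h := Complex.norm_exp_sub_sum_le_norm_mul_exp w 3
  simp only [sum_range_succ, sum_range_zero, Nat.factorial] at h
  convert h using 2
  push_cast
  ring

-- The central limit theorem for a Poisson variable of mean `L`.
lemma tendsto_exp_mul_sub_one_sub_id (t : ℝ) :
    Tendsto (fun L : ℝ ↦ Complex.exp (L * (Complex.exp ((t / √L : ℝ) * Complex.I) - 1 -
      (t / √L : ℝ) * Complex.I))) atTop (𝓝 (Complex.exp (-t ^ 2 / 2))) := by
  refine (Complex.continuous_exp.tendsto _).comp (tendsto_iff_norm_sub_tendsto_zero.2 ?_)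
  have hbound : Tendsto (fun L ↦ |t| ^ 3 * (√L)⁻¹ * exp (|t| * (√L)⁻¹)) atTop (𝓝 0) := by
    simpa using (tendsto_inv_sqrt.const_mul (|t| ^ 3)).mul
      ((continuous_exp.tendsto _).comp (tendsto_inv_sqrt.const_mul |t|))
  refine squeeze_zero' (Eventually.of_forall fun _ ↦ norm_nonneg _) ?_ hbound
  filter_upwards [eventually_gt_atTop 0] with L hL
  have hsqrt : √L ^ 2 = L := sq_sqrt hL.le
  have hsqrt_pos : 0 < √L := sqrt_pos.2 hL
  set w : ℂ := (t / √L : ℝ) * Complex.I with hw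
  have hnorm : ‖w‖ = |t| * (√L)⁻¹ := by
    rw [hw, norm_mul, Complex.norm_I, mul_one, Complex.norm_real, norm_eq_abs, abs_div,
      abs_of_pos hsqrt_pos, div_eq_mul_inv]
  have hsq : L * w ^ 2 = -t ^ 2 := by
    rw [hw, mul_pow, Complex.I_sq, ← Complex.ofReal_pow, div_pow, hsqrt]
    push_cast
    field_simp [hL.ne']
  calc ‖L * (Complex.exp w - 1 - w) - -t ^ 2 / 2‖
      = ‖(L : ℂ) * (Complex.exp w - 1 - w - w ^ 2 / 2)‖ := by
        rw [← hsq]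
        ring_nf
    _ ≤ L * ((|t| * (√L)⁻¹) ^ 3 * exp (|t| * (√L)⁻¹)) := by
        rw [norm_mul, Complex.norm_of_nonneg hL.le, ← hnorm]
        gcongr
        exact norm_exp_sub_one_sub_id_sub_sq_div_two_le w
    _ = |t| ^ 3 * (√L)⁻¹ * exp (|t| * (√L)⁻¹) := by
        nth_rewrite 1 [← hsqrt]
        field_simp

lemma tendsto_expect_exp_normalized_cardFactors (t : ℝ) :
    Tendsto (fun n : ℕ ↦ 𝔼 m ∈ Icc 1 n,
        Complex.exp (t * ((Ω m - log (log n)) / √(log (log n)) : ℝ) * Complex.I))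
      atTop (𝓝 (Complex.exp (-t ^ 2 / 2))) := by
  have herror : Tendsto (fun L ↦ |t / √L| * (2 * log L + 35) +
      exp (-L + exp 1 * |t / √L| * (L + 11)) + (t / √L) ^ 2) atTop (𝓝 0) := by
    simpa [div_eq_mul_inv] using ((tendsto_abs_div_sqrt_mul_log_add t 35).add
      (tendsto_exp_neg_add_mul_abs_div_sqrt t 11 (exp 1))).add
        ((tendsto_inv_sqrt.const_mul t).pow 2)
  have hpoisson := (tendsto_exp_mul_sub_one_sub_id t).comp tendsto_log_log_natCast
  refine hpoisson.congr_dist (squeeze_zero' (Eventually.of_forall fun _ ↦ dist_nonneg) ?_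
    (herror.comp tendsto_log_log_natCast))
  filter_upwards [tendsto_log_log_natCast.eventually_ge_atTop 1] with n hL
  simp only [Function.comp_apply]
  set L := log (log n)
  set θ := t / √L with hθ
  have hcenter_expect : 𝔼 m ∈ Icc 1 n, Complex.exp (t * ((Ω m - L) / √L : ℝ) * Complex.I) =
      Complex.exp ((-(θ * L) : ℝ) * Complex.I) *
        𝔼 m ∈ Icc 1 n, Complex.exp (θ * Ω m * Complex.I) := by
    rw [mul_expect]
    refine expect_congr rfl fun m _ ↦ ?_
    rw [← Complex.exp_add, hθ]
    push_cast
    ring_nf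
  have hcenter_poisson : Complex.exp (L * (Complex.exp (θ * Complex.I) - 1 - θ * Complex.I)) =
      Complex.exp ((-(θ * L) : ℝ) * Complex.I) *
        Complex.exp ((Complex.exp (θ * Complex.I) - 1) * L) := by
    rw [← Complex.exp_add]
    push_cast
    ring_nf
  rw [hcenter_expect, hcenter_poisson, dist_comm, dist_eq_norm, ← mul_sub, norm_mul,
    Complex.norm_exp_ofReal_mul_I, one_mul]
  exact norm_expect_exp_cardFactors_sub_exp_le hL θ

/-- The empirical distribution of `f` on the finite set `s`, i.e. the law of `f` at a uniformly
random point of `s`. It is the zero measure when `s` is empty. -/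
noncomputable def empiricalMeasure {α : Type*} (s : Finset α) (f : α → ℝ) : Measure ℝ :=
  (#s : ENNReal)⁻¹ • ∑ a ∈ s, Measure.dirac (f a)

section EmpiricalMeasure

variable {α : Type*} {s : Finset α} (f : α → ℝ)

lemma isProbabilityMeasure_empiricalMeasure (hs : s.Nonempty) :
    IsProbabilityMeasure (empiricalMeasure s f) where
  measure_univ := by
    simp only [empiricalMeasure, Measure.smul_apply, Measure.finsetSum_apply, measure_univ,
      sum_const, nsmul_eq_mul, mul_one, smul_eq_mul]
    exact ENNReal.inv_mul_cancel (by simpa using hs.ne_empty) (by simp)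

lemma charFun_empiricalMeasure (t : ℝ) :
    charFun (empiricalMeasure s f) t = 𝔼 a ∈ s, Complex.exp (t * f a * Complex.I) := by
  rw [charFun_apply_real, empiricalMeasure, integral_smul_measure,
    integral_finsetSum_measure fun a _ ↦ integrable_dirac (by simp)]
  simp only [integral_dirac, ENNReal.toReal_inv, ENNReal.toReal_natCast]
  rw [expect_eq_sum_div_card, Complex.real_smul, div_eq_inv_mul]
  push_cast
  rfl

lemma empiricalMeasure_real_Iic (x : ℝ) :
    (empiricalMeasure s f).real (Set.Iic x) = #{a ∈ s | f a ≤ x} / #s := by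
  simp only [measureReal_def, empiricalMeasure, Measure.smul_apply, Measure.finsetSum_apply,
    Measure.dirac_apply' _ measurableSet_Iic, Set.indicator_apply, Set.mem_Iic, Pi.one_apply,
    sum_boole, smul_eq_mul, ENNReal.toReal_mul, ENNReal.toReal_inv, ENNReal.toReal_natCast,
    div_eq_inv_mul]

end EmpiricalMeasure

lemma tendsto_card_filter_le_div_card_of_tendsto_charFun {α : Type*} {s : ℕ → Finset α}
    (hs : ∀ n, (s n).Nonempty) {f : ℕ → α → ℝ} {μ : Measure ℝ} [IsProbabilityMeasure μ]
    (h : ∀ t : ℝ, Tendsto (fun n ↦ 𝔼 a ∈ s n, Complex.exp (t * f n a * Complex.I)) atTop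
      (𝓝 (charFun μ t)))
    {x : ℝ} (hx : μ {x} = 0) :
    Tendsto (fun n ↦ (#{a ∈ s n | f n a ≤ x} / #(s n) : ℝ)) atTop (𝓝 (μ.real (Set.Iic x))) := by
  let P (n : ℕ) : ProbabilityMeasure ℝ :=
    ⟨empiricalMeasure (s n) (f n), isProbabilityMeasure_empiricalMeasure (f n) (hs n)⟩
  let Q : ProbabilityMeasure ℝ := ⟨μ, inferInstance⟩
  have hweak : Tendsto P atTop (𝓝 Q) := by
    rw [ProbabilityMeasure.tendsto_iff_tendsto_charFun]
    simpa only [P, Q, ProbabilityMeasure.coe_mk, charFun_empiricalMeasure] using h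
  have hfrontier : (Q : Measure ℝ) (frontier (Set.Iic x)) = 0 := by
    rw [frontier_Iic]
    exact hx
  simp only [← empiricalMeasure_real_Iic]
  exact (ENNReal.tendsto_toReal (measure_ne_top μ _)).comp
    (ProbabilityMeasure.tendsto_measure_of_null_frontier_of_tendsto' hweak hfrontier)

lemma gaussianReal_real_Iic (x : ℝ) : (gaussianReal 0 1).real (Set.Iic x) = stdNormalCDF x := by
  rw [measureReal_def, gaussianReal_apply_eq_integral _ one_ne_zero, ENNReal.toReal_ofReal
    (integral_nonneg fun t ↦ gaussianPDFReal_nonneg _ _ _), stdNormalCDF, ← integral_const_mul]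
  simp [gaussianPDFReal]

end ErdosKac

/-- Erdős–Kac theorem for `Ω`, the number of prime divisors counted with
multiplicity: the proportion of `m ≤ n` with
`Ω(m) - ln ln n ≤ x·√(ln ln n)` tends to `Φ(x)`. -/
theorem erdos_kac_bigOmega (x : ℝ) :
    Tendsto
      (fun n : ℕ =>
        (((Finset.Icc 1 n).filter (fun m =>
            (m.primeFactorsList.length : ℝ) - Real.log (Real.log n) ≤
              x * Real.sqrt (Real.log (Real.log n)))).card : ℝ) / n)
      atTop (nhds (stdNormalCDF x)) := by
  let f (n m : ℕ) : ℝ :=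
    (m.primeFactorsList.length - Real.log (Real.log n)) / √(Real.log (Real.log n))
  have hcharFun (t : ℝ) : Tendsto
      (fun n ↦ (Finset.Icc 1 (n + 1)).expect fun m ↦ Complex.exp (t * f (n + 1) m * Complex.I))
      atTop (nhds (charFun (ProbabilityTheory.gaussianReal 0 1) t)) := by
    have h := ErdosKac.tendsto_expect_exp_normalized_cardFactors t
    simpa [f, ArithmeticFunction.cardFactors_apply, ProbabilityTheory.charFun_gaussianReal,
      neg_div] using (tendsto_add_atTop_iff_nat 1).2 h
  have hatom : ProbabilityTheory.gaussianReal 0 1 {x} = 0 :=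
    have := ProbabilityTheory.nullSingletonClass_gaussianReal (μ := 0) one_ne_zero
    measure_singleton x
  have hcdf := ErdosKac.tendsto_card_filter_le_div_card_of_tendsto_charFun
    (fun n ↦ Finset.nonempty_Icc.2 n.succ_pos) hcharFun hatom
  simp only [Nat.card_Icc, Nat.add_sub_cancel] at hcdf
  rw [ErdosKac.gaussianReal_real_Iic,
    tendsto_add_atTop_iff_nat
      (f := fun n ↦ ({m ∈ Finset.Icc 1 n | f n m ≤ x}.card / n : ℝ)) 1] at hcdf
  refine hcdf.congr' ?_
  filter_upwards [ErdosKac.tendsto_log_log_natCast.eventually_gt_atTop 0] with n hL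
  simp only [f, div_le_iff₀ (Real.sqrt_pos.2 hL)]
end
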